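/- Let V1 be a subsystem of a Steiner triple system V with V1 ≠ V. Then there is an integer N such that for every integer u with u ≥ N and u ≡ 1 or 3 (mod 6), there exists a Steiner triple system U on u points containing copies of V and V1 as subsystems, both invariant under Aut U, such that Aut U is isomorphic to the set-stabilizer (Aut V)_{V1} = {g ∈ Aut V : g maps V1 onto itself}, and Aut U acts on the copy of V as that stabilizer. -/

import Mathlib

open Finset

noncomputable section
open scoped Classical

/-- `T` is the set of triples of a Steiner triple system on the finite type `α`:
every pair of distinct points lies in exactly one triple. -/
def IsSTS {α : Type*} (T : Finset (Finset α)) : Prop :=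
  (∀ t ∈ T, t.card = 3) ∧
    ∀ p q : α, p ≠ q → ∃! t : Finset α, t ∈ T ∧ p ∈ t ∧ q ∈ t

/-- `T` is the set of triples of a partial Steiner triple system on `α`:
every pair of distinct points lies in at most one triple. -/
def IsPSTS {α : Type*} (T : Finset (Finset α)) : Prop :=
  (∀ t ∈ T, t.card = 3) ∧
    ∀ p q : α, p ≠ q → ∀ t₁ ∈ T, ∀ t₂ ∈ T, p ∈ t₁ → q ∈ t₁ → p ∈ t₂ → q ∈ t₂ → t₁ = t₂

/-- `W` is a (closed) subsystem of the triple system `T`. -/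
def IsSub {α : Type*} (T : Finset (Finset α)) (W : Finset α) : Prop :=
  ∀ t ∈ T, 2 ≤ (t ∩ W).card → t ⊆ W

/-- `g` is an automorphism of the triple system `T`. -/
def IsAut {α : Type*} (T : Finset (Finset α)) (g : Equiv.Perm α) : Prop :=
  ∀ t : Finset α, t ∈ T ↔ t.image g ∈ T

/-- The automorphism group of a triple system, as a subgroup of the permutation group. -/
def autGroup {α : Type*} (T : Finset (Finset α)) : Subgroup (Equiv.Perm α) where
  carrier := {g : Equiv.Perm α | IsAut T g}
  one_mem' := by
    intro t
    simp
  mul_mem' := by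
    intro a b ha hb t
    have h1 := hb t
    have h2 := ha (t.image b)
    have key : t.image ⇑(a * b) = (t.image ⇑b).image ⇑a := by
      rw [Equiv.Perm.coe_mul, Finset.image_image]
    rw [key, ← h2]
    exact h1
  inv_mem' := by
    intro a ha t
    have h := ha (t.image ⇑a⁻¹)
    have key : (t.image ⇑a⁻¹).image ⇑a = t := by
      rw [Finset.image_image]
      have hc : (⇑a ∘ ⇑a⁻¹) = id := by
        funext x
        simp
      rw [hc, Finset.image_id]
    rw [key] at h
    exact h.symm

/-- `φ` embeds the triple system `S` onto a subsystem of `T`: it is injective, maps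
triples of `S` to triples of `T`, and the triples of `T` inside the image of `φ` are
precisely the images of the triples of `S`. -/
def IsCopy {α β : Type*} [Fintype α] (S : Finset (Finset α)) (T : Finset (Finset β))
    (φ : α → β) : Prop :=
  Function.Injective φ ∧ (∀ s ∈ S, s.image φ ∈ T) ∧
    ∀ t ∈ T, t ⊆ Finset.univ.image φ → ∃ s ∈ S, t = s.image φ

/-- The point set `W` is invariant under every automorphism of `T`. -/
def AutInvariant {β : Type*} (T : Finset (Finset β)) (W : Finset β) : Prop :=
  ∀ g : Equiv.Perm β, IsAut T g → W.image g = W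

/-- For the copy of `S` inside `T` given by `φ`, restriction gives a group isomorphism
from `Aut T` onto `Aut S`: every automorphism of `T` induces (via `φ`) an automorphism
of `S`, and every automorphism of `S` is induced by exactly one automorphism of `T`. -/
def AutRestrictIso {α β : Type*} (T : Finset (Finset β)) (S : Finset (Finset α))
    (φ : α → β) : Prop :=
  (∀ g : Equiv.Perm β, IsAut T g →
      ∃ h : Equiv.Perm α, IsAut S h ∧ ∀ x : α, g (φ x) = φ (h x)) ∧
    ∀ h : Equiv.Perm α, IsAut S h →
      ∃! g : Equiv.Perm β, IsAut T g ∧ ∀ x : α, g (φ x) = φ (h x)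

/-- `φ` embeds `S` as an `Aut T`-invariant subsystem of `T` on which `Aut T` induces
the full automorphism group of `S`, with `Aut T ≅ Aut S` via restriction. -/
def FullEmbedding {α β : Type*} [Fintype α] (S : Finset (Finset α)) (T : Finset (Finset β))
    (φ : α → β) : Prop :=
  IsCopy S T φ ∧ AutInvariant T (Finset.univ.image φ) ∧ AutRestrictIso T S φ

/-- The points of the projective space `PG(n,2)`: nonzero vectors of `GF(2)^{n+1}`. -/
abbrev PGPoint (n : ℕ) := {x : Fin (n + 1) → ZMod 2 // x ≠ 0}

/-- The lines of `PG(n,2)`: 3-sets of nonzero vectors summing to `0`. -/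
def PGTriples (n : ℕ) : Finset (Finset (PGPoint n)) :=
  Finset.univ.filter fun t : Finset (PGPoint n) =>
    t.card = 3 ∧ ∑ v ∈ t, (v : Fin (n + 1) → ZMod 2) = 0

/-- The smallest subsystem of `T` containing the point set `P`. -/
def GeneratedSub {α : Type*} [Fintype α] (T : Finset (Finset α)) (P : Finset α) : Finset α :=
  Finset.univ.filter fun x => ∀ W : Finset α, IsSub T W → P ⊆ W → x ∈ W

/-- `W` is a subsystem of `T` isomorphic to `PG(n,2)`. -/
def IsPGSub {α : Type*} [Fintype α] (n : ℕ) (T : Finset (Finset α)) (W : Finset α) : Prop :=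
  ∃ φ : PGPoint n → α, IsCopy (PGTriples n) T φ ∧ Finset.univ.image φ = W

/-- A triple system is `PG(2,2)`-paired if any two distinct points lie in at least two
subsystems isomorphic to `PG(2,2)`. -/
def PG22Paired {α : Type*} [Fintype α] (T : Finset (Finset α)) : Prop :=
  ∀ p q : α, p ≠ q → ∃ W₁ W₂ : Finset α, W₁ ≠ W₂ ∧
    (p ∈ W₁ ∧ q ∈ W₁ ∧ IsPGSub 2 T W₁) ∧ p ∈ W₂ ∧ q ∈ W₂ ∧ IsPGSub 2 T W₂

/-- `T` is `PG(3,2)`-2-pointed with respect to the points `p, q`: any four points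
including `p` and `q` generate a subsystem isomorphic to `PG(2,2)` or `PG(3,2)`. -/
def PG32TwoPointed {α : Type*} [Fintype α] (T : Finset (Finset α)) (p q : α) : Prop :=
  p ≠ q ∧ ∀ s : Finset α, s.card = 4 → p ∈ s → q ∈ s →
    IsPGSub 2 T (GeneratedSub T s) ∨ IsPGSub 3 T (GeneratedSub T s)

/-- The copy of `Y` inside `2Y+1`. -/
def dp0 {γ : Type*} (a : γ) : γ ⊕ γ ⊕ Unit := Sum.inl a

/-- The disjoint copy `Y₁` of `Y` inside `2Y+1`. -/
def dp1 {γ : Type*} (a : γ) : γ ⊕ γ ⊕ Unit := Sum.inr (Sum.inl a)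

/-- The extra point `*` of `2Y+1`. -/
def dpStar {γ : Type*} : γ ⊕ γ ⊕ Unit := Sum.inr (Sum.inr ())

/-- The triples of the Steiner triple system `2Y+1` built from a system `Y` with
triple set `T`. -/
def DoubleTriples {γ : Type*} [Fintype γ] (T : Finset (Finset γ)) :
    Finset (Finset (γ ⊕ γ ⊕ Unit)) :=
  Finset.univ.filter fun t : Finset (γ ⊕ γ ⊕ Unit) =>
    (∃ s ∈ T, t = s.image dp0) ∨
    (∃ a : γ, t = {dpStar, dp0 a, dp1 a}) ∨
    (∃ a b c : γ, ({a, b, c} : Finset γ) ∈ T ∧ t = {dp1 a, dp1 b, dp0 c})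

/-- The triples of the direct product of two triple systems. -/
def ProdTriples {α β : Type*} [Fintype α] [Fintype β]
    (TA : Finset (Finset α)) (TB : Finset (Finset β)) : Finset (Finset (α × β)) :=
  Finset.univ.filter fun t : Finset (α × β) =>
    (∃ a : α, ∃ s ∈ TB, t = s.image fun b => (a, b)) ∨
    (∃ b : β, ∃ s ∈ TA, t = s.image fun a => (a, b)) ∨
    (∃ a₁ a₂ a₃ : α, ∃ b₁ b₂ b₃ : β, ({a₁, a₂, a₃} : Finset α) ∈ TA ∧
      ({b₁, b₂, b₃} : Finset β) ∈ TB ∧ t = {(a₁, b₁), (a₂, b₂), (a₃, b₃)})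

/-- The triples of Moore's construction `U = X ∪ (V × A)`.  Here `TX` (on `δ`), `TV`
(on `α`), `TY` (on `γ`) are the triple sets of `X`, `V`, `Y`; `j : δ → γ` embeds `X`
as a subsystem of `Y` and `ℓ : A → γ` labels `Y − X` by the group `A`. -/
def MooreTriples {δ α γ A : Type*} [Fintype δ] [Fintype α] [Fintype A] [Group A]
    (TX : Finset (Finset δ)) (TV : Finset (Finset α)) (TY : Finset (Finset γ))
    (j : δ → γ) (ℓ : A → γ) : Finset (Finset (δ ⊕ α × A)) :=
  Finset.univ.filter fun t : Finset (δ ⊕ α × A) =>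
    (∃ s ∈ TX, t = s.image Sum.inl) ∨
    (∃ v : α, ∃ a₁ a₂ : A, ∃ x : δ, ({ℓ a₁, ℓ a₂, j x} : Finset γ) ∈ TY ∧
      t = {Sum.inr (v, a₁), Sum.inr (v, a₂), Sum.inl x}) ∨
    (∃ v : α, ∃ a₁ a₂ a₃ : A, ({ℓ a₁, ℓ a₂, ℓ a₃} : Finset γ) ∈ TY ∧
      t = {Sum.inr (v, a₁), Sum.inr (v, a₂), Sum.inr (v, a₃)}) ∨
    (∃ v₁ v₂ v₃ : α, ∃ a₁ a₂ a₃ : A, ({v₁, v₂, v₃} : Finset α) ∈ TV ∧ a₁ * a₂ * a₃ = 1 ∧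
      t = {Sum.inr (v₁, a₁), Sum.inr (v₂, a₂), Sum.inr (v₃, a₃)})

/-- The hypotheses of Moore's construction: `Y` and `V` are Steiner triple systems,
`A` is a cyclic group, `j` embeds `X` as a subsystem of `Y` (with triple set `TX`),
and `ℓ` is a bijective labeling of `Y − X` by `A`. -/
def MooreSetup {δ α γ A : Type*} [Fintype δ] [Group A]
    (TX : Finset (Finset δ)) (TV : Finset (Finset α)) (TY : Finset (Finset γ))
    (j : δ → γ) (ℓ : A → γ) : Prop :=
  IsSTS TY ∧ IsSTS TV ∧ IsCyclic A ∧ Function.Injective j ∧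
    IsSub TY (Finset.univ.image j) ∧ IsCopy TX TY j ∧
    Function.Injective ℓ ∧ Set.range ℓ = (Set.range j)ᶜ

/-- The subsystem `Y_v = X ∪ (v × A)` of Moore's construction. -/
def MooreY {δ α A : Type*} [Fintype δ] [Fintype A] (v : α) : Finset (δ ⊕ α × A) :=
  (Finset.univ.image (Sum.inl : δ → δ ⊕ α × A)) ∪
    Finset.univ.image fun a : A => (Sum.inr (v, a) : δ ⊕ α × A)

/-- A subsystem of type (3.1) of Moore's construction, where `ε` denotes the unique
involution `−1` of `A`: the seven points `x, (v_i, a_i), (v_i, −a_i)` for a triple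
`{v₁,v₂,v₃}` of `V`, with `a₁a₂a₃ = 1` and `{a_i, −a_i, x}` a triple of `Y`. -/
def MooreType31 {δ α γ A : Type*} [Group A] (TV : Finset (Finset α))
    (TY : Finset (Finset γ)) (j : δ → γ) (ℓ : A → γ) (ε : A)
    (W : Finset (δ ⊕ α × A)) : Prop :=
  ∃ v₁ v₂ v₃ : α, ∃ a₁ a₂ a₃ : A, ∃ x : δ,
    ({v₁, v₂, v₃} : Finset α) ∈ TV ∧ a₁ * a₂ * a₃ = 1 ∧
    ({ℓ a₁, ℓ (ε * a₁), j x} : Finset γ) ∈ TY ∧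
    ({ℓ a₂, ℓ (ε * a₂), j x} : Finset γ) ∈ TY ∧
    ({ℓ a₃, ℓ (ε * a₃), j x} : Finset γ) ∈ TY ∧
    W = {Sum.inl x, Sum.inr (v₁, a₁), Sum.inr (v₁, ε * a₁), Sum.inr (v₂, a₂),
         Sum.inr (v₂, ε * a₂), Sum.inr (v₃, a₃), Sum.inr (v₃, ε * a₃)}

/-- The point set of a family of triples. -/
def ptsOf {β : Type*} (T : Finset (Finset β)) : Finset β := T.sup id

/-- Adjacency of triples: two distinct triples of `T` meeting in a point. -/
def TriAdj {β : Type*} (T : Finset (Finset β)) (t s : Finset β) : Prop :=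
  t ∈ T ∧ s ∈ T ∧ t ≠ s ∧ (t ∩ s).Nonempty

/-- A partial Steiner triple system is cyclic if the graph whose vertices are its
triples, two joined when they meet, is a cycle (equivalently: it has at least three
triples, every triple meets exactly two others, and the graph is connected). -/
def IsCyclicPSTS {β : Type*} (T : Finset (Finset β)) : Prop :=
  3 ≤ T.card ∧ (∀ t ∈ T, (T.filter fun s => s ≠ t ∧ (s ∩ t).Nonempty).card = 2) ∧
    ∀ t ∈ T, ∀ s ∈ T, Relation.ReflTransGen (TriAdj T) t s

/-- The partial Steiner triple system `Q(z)` (for the parameter `n`), with triple set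
`T`, point set `P` and distinguished point `z`: two cyclic PSTSs `C₁, C₂` on
`2n+4` and `2n+6` points meeting exactly in the point `z`, which lies in two triples
of each, triples `{z, z'_i, z_i}` of `C_i` with `z'_i` in two triples of `C_i`, and a
new point `z'` in the single additional triple `{z'_1, z', z'_2}`. -/
def IsQ {β : Type*} (n : ℕ) (T : Finset (Finset β)) (P : Finset β) (z : β) : Prop :=
  ∃ C₁ C₂ : Finset (Finset β), ∃ z' z₁' z₂' z₁ z₂ : β,
    IsPSTS T ∧ IsCyclicPSTS C₁ ∧ IsCyclicPSTS C₂ ∧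
    (ptsOf C₁).card = 2 * n + 4 ∧ (ptsOf C₂).card = 2 * n + 6 ∧
    ptsOf C₁ ∩ ptsOf C₂ = {z} ∧
    (C₁.filter fun t => z ∈ t).card = 2 ∧ (C₂.filter fun t => z ∈ t).card = 2 ∧
    ({z, z₁', z₁} : Finset β) ∈ C₁ ∧ (C₁.filter fun t => z₁' ∈ t).card = 2 ∧
    ({z, z₂', z₂} : Finset β) ∈ C₂ ∧ (C₂.filter fun t => z₂' ∈ t).card = 2 ∧
    z' ∉ ptsOf C₁ ∪ ptsOf C₂ ∧
    T = C₁ ∪ C₂ ∪ {({z₁', z', z₂'} : Finset β)} ∧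
    P = ptsOf C₁ ∪ ptsOf C₂ ∪ {z'}

/-- Nonempty subsets of `β`: the points of the projective space `P` over `GF(2)`
built on a point set `β`. -/
abbrev NESet (β : Type*) := {s : Finset β // s.Nonempty}

/-- The triples of the projective space over `GF(2)` on the nonempty subsets of `β`:
3-sets of subsets with empty symmetric difference. -/
def sdTriples (β : Type*) [Fintype β] : Finset (Finset (NESet β)) :=
  Finset.univ.filter fun t : Finset (NESet β) =>
    ∃ a b c : NESet β, a ≠ b ∧ a ≠ c ∧ b ≠ c ∧ t = {a, b, c} ∧
      symmDiff (symmDiff a.1 b.1) c.1 = ∅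

/-- The singleton `{a}` as a point of the projective space. -/
def sEl {β : Type*} (a : β) : NESet β := ⟨{a}, Finset.singleton_nonempty a⟩

/-- The pair `{a,b}` as a point of the projective space. -/
def pEl {β : Type*} (a b : β) : NESet β := ⟨{a, b}, Finset.insert_nonempty a {b}⟩

/-- The triples of `P` removed in Cameron's construction, for each triple `{a,b,c}`
of `V'`. -/
def removedTriples {β : Type*} [Fintype β] (TV' : Finset (Finset β)) :
    Finset (Finset (NESet β)) :=
  Finset.univ.filter fun t : Finset (NESet β) =>
    ∃ a b c : β, ({a, b, c} : Finset β) ∈ TV' ∧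
      (t = {pEl a b, pEl a c, pEl b c} ∨ t = {sEl a, sEl b, pEl a b} ∨
       t = {sEl a, sEl c, pEl a c} ∨ t = {sEl b, sEl c, pEl b c})

/-- The new triples of Cameron's construction, for each triple `{a,b,c}` of `V'`. -/
def addedTriples {β : Type*} [Fintype β] (TV' : Finset (Finset β)) :
    Finset (Finset (NESet β)) :=
  Finset.univ.filter fun t : Finset (NESet β) =>
    ∃ a b c : β, ({a, b, c} : Finset β) ∈ TV' ∧
      (t = {sEl a, sEl b, sEl c} ∨ t = {sEl a, pEl a b, pEl a c} ∨
       t = {sEl b, pEl a b, pEl b c} ∨ t = {sEl c, pEl a c, pEl b c})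

/-- The Steiner triple system `U` of Cameron's construction obtained from the
projective space `P` and the partial system `V'`. -/
def CameronSTS {β : Type*} [Fintype β] (TV' : Finset (Finset β)) :
    Finset (Finset (NESet β)) :=
  (sdTriples β \ removedTriples TV') ∪ addedTriples TV'

/-!
Colour the points of `V` by membership in `W`; it suffices to extend any coloured system to a system
`S` of every large admissible order in such a way that restriction identifies `Aut S` with the
colour-preserving automorphisms. Doubling `V` once or twice, with colours that tell the two copies
apart, reduces this to `|V| ≡ 1 (mod 6)` and `|V| ≥ 7`.

Moore's construction puts a Steiner triple system on `X ∪ (V × A)`, where `X ∪ ({v} × A)` carries a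
prescribed system for every `v` and triples across three fibres are given by `a + b + c = 0`. With
suitable sizes, a point of `X` forms many quadrangles with more points than a point of `V × A` does,
so automorphisms preserve `X` and permute the blocks `X ∪ ({v} × A)`. The relation `a + b + c = 0`
then forces them to act on the fibres by affine maps with a common linear part.

Now let `A = ℤ/4 × ℤ/w`. The prescribed systems induce on the levels `{i} × ℤ/w` copies of a single
system twisted by transpositions that encode the colour of `v`. Since the supports of the
transpositions are small, an affine map compatible with the twists is the identity and preserves
colours. The differences between levels are partly used up by translates of triples, and the
remaining ones are the points of `X`; the number of triples used adjusts the order of `S` in steps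
of `6`.
-/

/-- A Steiner quasigroup, the algebraic form of a Steiner triple system: `op a b` is the third
point of the triple through `a ≠ b`, and `op a a = a`. -/
structure SteinerQuasigroup (P : Type*) where
  op : P → P → P
  op_self : ∀ a, op a a = a
  op_comm : ∀ a b, op a b = op b a
  op_op : ∀ a b, op a (op a b) = b

namespace SteinerQuasigroup

/-! ### Steiner quasigroups -/

section Basic

variable {P Q R : Type*} (S : SteinerQuasigroup P) {S' : SteinerQuasigroup Q}
  {S'' : SteinerQuasigroup R}

lemma op_involutive (a : P) : Function.Involutive (S.op a) := S.op_op a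

lemma op_op_right (a b : P) : S.op (S.op a b) b = a := by
  rw [S.op_comm, S.op_comm a b, S.op_op]

lemma op_eq_left {a b : P} : S.op a b = a ↔ b = a := by
  rw [(S.op_involutive a).eq_iff, S.op_self]

lemma op_eq_right {a b : P} : S.op a b = b ↔ a = b := by
  rw [S.op_comm, S.op_eq_left]

variable {S}

lemma left_ne_op {a b : P} (h : a ≠ b) : a ≠ S.op a b := fun hab =>
  h (S.op_eq_left.mp hab.symm).symm

lemma right_ne_op {a b : P} (h : a ≠ b) : b ≠ S.op a b := fun hab =>
  h (S.op_eq_right.mp hab.symm)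

/-- Homomorphisms of Steiner quasigroups; the bijective ones are the isomorphisms of the
corresponding triple systems. -/
def IsHom (S : SteinerQuasigroup P) (S' : SteinerQuasigroup Q) (g : P → Q) : Prop :=
  ∀ a b, g (S.op a b) = S'.op (g a) (g b)

lemma IsHom.comp {g : Q → R} {f : P → Q} (hg : S'.IsHom S'' g) (hf : S.IsHom S' f) :
    S.IsHom S'' (g ∘ f) := fun a b => by
  rw [Function.comp_apply, hf, hg, Function.comp_apply, Function.comp_apply]

lemma IsHom.symm {g : P ≃ Q} (hg : S.IsHom S' g) : S'.IsHom S g.symm := fun a b =>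
  g.symm_apply_eq.mpr (by rw [hg, g.apply_symm_apply, g.apply_symm_apply])

/-- Transport of a Steiner quasigroup along a bijection. -/
def map (S : SteinerQuasigroup P) (e : P ≃ Q) : SteinerQuasigroup Q where
  op a b := e (S.op (e.symm a) (e.symm b))
  op_self a := by rw [S.op_self, e.apply_symm_apply]
  op_comm a b := by rw [S.op_comm]
  op_op a b := by rw [e.symm_apply_apply, S.op_op, e.apply_symm_apply]

lemma isHom_map (S : SteinerQuasigroup P) (e : P ≃ Q) : S.IsHom (S.map e) e := fun a b => by
  simp only [map, e.symm_apply_apply]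

/-- The Steiner quasigroup of a totally symmetric ternary relation `r a b c`, to be read as
`op a b = c`. -/
def ofRel (r : P → P → P → Prop) (self : ∀ a, r a a a) (swap_left : ∀ a b c, r a b c → r b a c)
    (swap_right : ∀ a b c, r a b c → r a c b) (existsUnique : ∀ a b, ∃! c, r a b c) :
    SteinerQuasigroup P where
  op a b := (existsUnique a b).choose
  op_self a := (existsUnique a a).unique (existsUnique a a).choose_spec.1 (self a)
  op_comm a b := (existsUnique a b).unique (existsUnique a b).choose_spec.1
    (swap_left _ _ _ (existsUnique b a).choose_spec.1)
  op_op a b := (existsUnique a _).unique (existsUnique a _).choose_spec.1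
    (swap_right _ _ _ (existsUnique a b).choose_spec.1)

end Basic

section Closed

variable {P Q : Type*} {S : SteinerQuasigroup P} {S' : SteinerQuasigroup Q} {X Y Z : Finset P}

variable (S) in
/-- The finite subsystems of a Steiner quasigroup. -/
def Closed (Z : Finset P) : Prop :=
  ∀ a ∈ Z, ∀ b ∈ Z, S.op a b ∈ Z

lemma closed_univ [Fintype P] : S.Closed univ := fun _ _ _ _ => mem_univ _

lemma Closed.inter [DecidableEq P] (hY : S.Closed Y) (hZ : S.Closed Z) :
    S.Closed (Y ∩ Z) := fun a ha b hb =>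
  mem_inter.mpr ⟨hY a (mem_inter.mp ha).1 b (mem_inter.mp hb).1,
    hZ a (mem_inter.mp ha).2 b (mem_inter.mp hb).2⟩

lemma Closed.image [DecidableEq Q] {f : P → Q} (hZ : S.Closed Z) (hf : S.IsHom S' f) :
    S'.Closed (Z.image f) := by
  simp only [Closed, forall_mem_image, ← hf _ _]
  exact fun a ha b hb => mem_image_of_mem f (hZ a ha b hb)

lemma IsHom.closed_eqLocus [Fintype P] {f g : P → Q} (hf : S.IsHom S' f) (hg : S.IsHom S' g) :
    S.Closed {a | f a = g a} := by
  intro a ha b hb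
  rw [mem_filter_univ] at ha hb ⊢
  rw [hf, hg, ha, hb]

lemma Closed.two_mul_card_lt (hZ : S.Closed Z) (hY : S.Closed Y) (hZY : Z ⊂ Y) :
    2 * #Z < #Y := by
  obtain ⟨p, hpY, hpZ⟩ := exists_of_ssubset hZY
  have hpa : ∀ a ∈ Z, S.op p a ∉ Z := fun a ha h => hpZ (S.op_op_right p a ▸ hZ _ h _ ha)
  have hdisj : Disjoint Z (Z.image (S.op p)) := by
    simpa only [disjoint_right, forall_mem_image] using hpa
  have hp : p ∉ Z ∪ Z.image (S.op p) := by
    simp only [mem_union, mem_image, not_or, not_exists, not_and, S.op_eq_left]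
    exact ⟨hpZ, fun a ha hap => hpZ (hap ▸ ha)⟩
  have hsub : insert p (Z ∪ Z.image (S.op p)) ⊆ Y :=
    insert_subset hpY (union_subset hZY.1 (image_subset_iff.mpr fun a ha => hY p hpY a (hZY.1 ha)))
  have hcard := card_le_card hsub
  rw [card_insert_of_notMem hp, card_union_of_disjoint hdisj,
    card_image_of_injective _ (S.op_involutive p).injective] at hcard
  omega

lemma Closed.eq_of_card_lt (hX : S.Closed X) (hZ : S.Closed Z) (hY : S.Closed Y) (hXZ : X ⊂ Z)
    (hZY : Z ⊆ Y) (hcard : #Y < 4 * #X + 3) : Z = Y := by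
  by_contra hne
  have h1 := hX.two_mul_card_lt hZ hXZ
  have h2 := hZ.two_mul_card_lt hY (hZY.ssubset_of_ne hne)
  omega

lemma IsHom.eq_of_card_le [Fintype P] {f g : P → Q} (hf : S.IsHom S' f) (hg : S.IsHom S' g)
    (h : Fintype.card P ≤ 2 * #{a | f a = g a}) : f = g := by
  by_contra hne
  have hproper : ({a | f a = g a} : Finset P) ⊂ univ := by
    rw [ssubset_univ_iff, Ne, filter_eq_self]
    exact fun hall => hne (funext fun a => hall a (mem_univ a))
  have := (hf.closed_eqLocus hg).two_mul_card_lt closed_univ hproper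
  rw [card_univ] at this
  omega

end Closed

/-! ### Triple systems as quasigroups -/

section Triples

variable {P Q : Type*} [Fintype P] [Fintype Q] {S : SteinerQuasigroup P}
  {S' : SteinerQuasigroup Q} {t : Finset P} {p q : P}

variable (S) in
/-- The triples of a Steiner quasigroup. -/
def triples : Finset (Finset P) := {t | ∃ p q, p ≠ q ∧ t = {p, q, S.op p q}}

lemma mem_triples : t ∈ S.triples ↔ ∃ p q, p ≠ q ∧ t = {p, q, S.op p q} := mem_filter_univ t

lemma triple_mem_triples (h : p ≠ q) : {p, q, S.op p q} ∈ S.triples :=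
  mem_triples.mpr ⟨p, q, h, rfl⟩

lemma eq_of_mem_triples (ht : t ∈ S.triples) (hp : p ∈ t) (hq : q ∈ t) (hpq : p ≠ q) :
    t = {p, q, S.op p q} := by
  obtain ⟨a, b, -, rfl⟩ := mem_triples.mp ht
  have h₁ := S.op_op_right a b
  have h₂ := S.op_op a b
  simp only [mem_insert, mem_singleton] at hp hq
  rcases hp with rfl | rfl | rfl <;> rcases hq with rfl | rfl | rfl <;> ext x <;> grind [S.op_comm]

lemma isSTS_triples (S : SteinerQuasigroup P) : IsSTS S.triples := by
  refine ⟨fun t ht => ?_, fun p q hpq => ⟨_, ⟨triple_mem_triples hpq, by simp, by simp⟩, ?_⟩⟩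
  · obtain ⟨p, q, hpq, rfl⟩ := mem_triples.mp ht
    exact card_eq_three.mpr ⟨p, q, S.op p q, hpq, left_ne_op hpq, right_ne_op hpq, rfl⟩
  · rintro t ⟨ht, hp, hq⟩
    exact eq_of_mem_triples ht hp hq hpq

lemma isHom_iff_image_mem_triples {f : P → Q} (hf : Function.Injective f) :
    S.IsHom S' f ↔ ∀ t ∈ S.triples, t.image f ∈ S'.triples := by
  constructor
  · intro hhom t ht
    obtain ⟨p, q, hpq, rfl⟩ := mem_triples.mp ht
    simpa only [image_insert, image_singleton, hhom p q] using triple_mem_triples (hf.ne hpq)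
  · intro himage p q
    rcases eq_or_ne p q with rfl | hpq
    · rw [S.op_self, S'.op_self]
    have htriple := eq_of_mem_triples (himage _ (triple_mem_triples hpq))
      (mem_image_of_mem f (by simp)) (mem_image_of_mem f (by simp)) (hf.ne hpq)
    have hthird : f (S.op p q) ∈ ({f p, f q, S'.op (f p) (f q)} : Finset Q) :=
      htriple ▸ mem_image_of_mem f (by simp)
    simp only [mem_insert, mem_singleton, hf.eq_iff, S.op_eq_left, S.op_eq_right] at hthird
    exact (hthird.resolve_left hpq.symm).resolve_left hpq

lemma isAut_triples_iff {g : Equiv.Perm P} : IsAut S.triples g ↔ S.IsHom S g := by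
  refine ⟨fun hg => (isHom_iff_image_mem_triples g.injective).mpr fun t => (hg t).mp,
    fun hg t => ⟨(isHom_iff_image_mem_triples g.injective).mp hg t, fun ht => ?_⟩⟩
  have := (isHom_iff_image_mem_triples g.symm.injective).mp hg.symm _ ht
  rwa [image_image, g.symm_comp_self, image_id] at this

lemma IsHom.isCopy_triples {f : P → Q} (hhom : S.IsHom S' f) (hf : Function.Injective f) :
    IsCopy S.triples S'.triples f := by
  refine ⟨hf, (isHom_iff_image_mem_triples hf).mp hhom, fun t ht hsub => ?_⟩
  obtain ⟨x, y, hxy, rfl⟩ := mem_triples.mp ht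
  obtain ⟨p, -, rfl⟩ := mem_image.mp (hsub (mem_insert_self x _))
  obtain ⟨q, -, rfl⟩ := mem_image.mp (hsub (mem_insert_of_mem (mem_insert_self y _)))
  exact ⟨_, triple_mem_triples (ne_of_apply_ne f hxy), by
    rw [image_insert, image_insert, image_singleton, hhom]⟩

end Triples

end SteinerQuasigroup

namespace IsSTS

variable {α : Type*} {T : Finset (Finset α)}

lemma ne_of_triple_mem (hT : IsSTS T) {p q r : α} (h : {p, q, r} ∈ T) : p ≠ q ∧ p ≠ r ∧ q ≠ r := by
  have := hT.1 _ h
  refine ⟨?_, ?_, ?_⟩ <;> rintro rfl <;>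
    exact absurd this (by simpa using (card_le_two.trans_lt (by decide)).ne)

lemma existsUnique_third (hT : IsSTS T) (p q : α) : ∃! r, (p = q ∧ q = r) ∨ {p, q, r} ∈ T := by
  rcases eq_or_ne p q with rfl | hpq
  · refine ⟨p, .inl ⟨rfl, rfl⟩, ?_⟩
    rintro r (⟨-, h⟩ | h)
    · exact h.symm
    · exact absurd rfl (hT.ne_of_triple_mem h).1
  obtain ⟨t, ⟨ht, hp, hq⟩, huniq⟩ := hT.2 p q hpq
  obtain ⟨r, -, rfl⟩ : ∃ r ∉ ({p, q} : Finset α), insert r {p, q} = t :=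
    exists_eq_insert_iff.mpr ⟨by simp [insert_subset_iff, hp, hq], by rw [card_pair hpq, hT.1 t ht]⟩
  have hrot : ({r, p, q} : Finset α) = {p, q, r} := by rw [insert_comm, pair_comm r q]
  refine ⟨r, .inr (hrot ▸ ht), ?_⟩
  rintro r' (⟨h, -⟩ | h)
  · exact absurd h hpq
  have hmem : r' ∈ ({r, p, q} : Finset α) := huniq _ ⟨h, by simp, by simp⟩ ▸ by simp
  obtain ⟨-, hpr, hqr⟩ := hT.ne_of_triple_mem h
  simpa [hpr.symm, hqr.symm] using hmem

theorem exists_triples_eq [Fintype α] (hT : IsSTS T) :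
    ∃ S : SteinerQuasigroup α, S.triples = T := by
  let S : SteinerQuasigroup α := .ofRel (fun p q r => (p = q ∧ q = r) ∨ {p, q, r} ∈ T)
    (fun a => .inl ⟨rfl, rfl⟩) (fun a b c h => by rw [insert_comm]; grind)
    (fun a b c h => by rw [pair_comm]; grind) hT.existsUnique_third
  have hS : ∀ p q, p ≠ q → {p, q, S.op p q} ∈ T := fun p q hpq =>
    (hT.existsUnique_third p q).choose_spec.1.resolve_left fun h => hpq h.1
  refine ⟨S, ext fun t => SteinerQuasigroup.mem_triples.trans ⟨?_, fun ht => ?_⟩⟩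
  · rintro ⟨p, q, hpq, rfl⟩
    exact hS p q hpq
  · obtain ⟨p, q, r, hpq, -, -, rfl⟩ := card_eq_three.mp (hT.1 t ht)
    exact ⟨p, q, hpq, (hT.2 p q hpq).unique ⟨ht, by simp, by simp⟩
      ⟨hS p q hpq, by simp, by simp⟩⟩

end IsSTS

namespace SteinerQuasigroup

/-! ### Quadrangles -/

section Quadrangles

variable {P : Type*} [Fintype P] {S : SteinerQuasigroup P} {g : Equiv.Perm P}

variable (S) in
/-- The points lying on a closed walk of length four in the graph in which every point is joined
to its third points with `p` and with `q`. -/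
def quads (p q : P) : Finset P := {r | S.op q (S.op p (S.op q (S.op p r))) = r}

variable (S) in
/-- The points that form at least `k` quadrangles together with `p`. -/
def heavy (k : ℕ) (p : P) : Finset P := {q | k ≤ #(S.quads p q)}

lemma mem_quads {p q r : P} : r ∈ S.quads p q ↔ S.op q (S.op p (S.op q (S.op p r))) = r :=
  mem_filter_univ r

lemma mem_heavy {k : ℕ} {p q : P} : q ∈ S.heavy k p ↔ k ≤ #(S.quads p q) := mem_filter_univ q

lemma IsHom.card_quads (hg : S.IsHom S g) (p q : P) : #(S.quads (g p) (g q)) = #(S.quads p q) :=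
  (card_equiv g fun r => by simp only [mem_quads, ← hg _ _, g.apply_eq_iff_eq]).symm

lemma IsHom.card_heavy (hg : S.IsHom S g) (k : ℕ) (p : P) : #(S.heavy k (g p)) = #(S.heavy k p) :=
  (card_equiv g fun q => by simp only [mem_heavy, hg.card_quads]).symm

lemma card_quads_le {p q : P} (hpq : p ≠ q) : #(S.quads p q) ≤ Fintype.card P - 3 := by
  have hp : p ≠ S.op p q := left_ne_op hpq
  have hq : q ≠ S.op p q := right_ne_op hpq
  have hdisj : Disjoint (S.quads p q) {p, q, S.op p q} := by
    simp only [disjoint_right, mem_insert, mem_singleton, forall_eq_or_imp, forall_eq, mem_quads,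
      S.op_self, S.op_comm q, S.op_op, S.op_op_right]
    exact ⟨hpq.symm, hq.symm, hp⟩
  have hcard := card_le_univ (S.quads p q ∪ {p, q, S.op p q})
  rw [card_union_of_disjoint hdisj, card_eq_three.mpr ⟨p, q, _, hpq, hp, hq, rfl⟩] at hcard
  omega

end Quadrangles

/-! ### Moore's construction -/

section Moore

variable {X A α Q : Type*}

/-- The embedding of `X ∪ A` as `X ∪ ({v} × A)`. -/
def fiberMap (v : α) : X ⊕ A → X ⊕ α × A := Sum.map id (Prod.mk v)

lemma fiberMap_injective (v : α) : Function.Injective (fiberMap v : X ⊕ A → X ⊕ α × A) :=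
  Sum.map_injective.mpr ⟨Function.injective_id, Prod.mk_right_injective v⟩

lemma fiberMap_eq_inr {v z : α} {a : A} {p : X ⊕ A} (h : fiberMap v p = .inr (z, a)) : v = z := by
  rcases p with x | b
  · cases h
  · exact congrArg Prod.fst (Sum.inr_injective h)

lemma fiberMap_cases [Nonempty α] (p q : X ⊕ α × A) :
    (∃ v p' q', p = fiberMap v p' ∧ q = fiberMap v q') ∨
      ∃ v w a b, v ≠ w ∧ p = .inr (v, a) ∧ q = .inr (w, b) := by
  rcases p with x | ⟨v, a⟩ <;> rcases q with y | ⟨w, b⟩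
  · exact .inl ⟨Classical.arbitrary α, .inl x, .inl y, rfl, rfl⟩
  · exact .inl ⟨w, .inl x, .inr b, rfl, rfl⟩
  · exact .inl ⟨v, .inr a, .inl y, rfl, rfl⟩
  · rcases eq_or_ne v w with rfl | hvw
    · exact .inl ⟨v, .inr a, .inr b, rfl, rfl⟩
    · exact .inr ⟨v, w, a, b, hvw, rfl, rfl⟩

/-- The data of Moore's construction: every `Y v` extends `B` by the points of `A`, and `x` acts on
`A` as `π x` in each of them. -/
structure IsMooreFamily (B : SteinerQuasigroup X) (π : X → A → A)
    (Y : α → SteinerQuasigroup (X ⊕ A)) : Prop where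
  base : ∀ v x y, (Y v).op (.inl x) (.inl y) = .inl (B.op x y)
  act : ∀ v x a, (Y v).op (.inl x) (.inr a) = .inr (π x a)

variable {V : SteinerQuasigroup α} {B : SteinerQuasigroup X} {π : X → A → A}
  {Y : α → SteinerQuasigroup (X ⊕ A)} {S : SteinerQuasigroup Q}

lemma IsMooreFamily.involutive [Nonempty α] (hY : IsMooreFamily B π Y) (x : X) :
    Function.Involutive (π x) := fun a => Sum.inr_injective <| by
  rw [← hY.act (Classical.arbitrary α), ← hY.act (Classical.arbitrary α), op_op]

variable [AddCommGroup A]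

/-- The operation of Moore's construction on `X ∪ (V × A)`: the systems `Y v` on `X ∪ A` are placed
on `X ∪ ({v} × A)`, and points over different `v` are completed by `a + b + c = 0`. -/
def mooreOp (V : SteinerQuasigroup α) (B : SteinerQuasigroup X) (π : X → A → A)
    (Y : α → SteinerQuasigroup (X ⊕ A)) : X ⊕ α × A → X ⊕ α × A → X ⊕ α × A
  | .inl x, .inl y => .inl (B.op x y)
  | .inl x, .inr (v, a) => .inr (v, π x a)
  | .inr (v, a), .inl x => .inr (v, π x a)
  | .inr (v, a), .inr (w, b) =>
    if v = w then fiberMap v ((Y v).op (.inr a) (.inr b)) else .inr (V.op v w, -a - b)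

lemma mooreOp_fiberMap (hY : IsMooreFamily B π Y) (v : α) (p q : X ⊕ A) :
    mooreOp V B π Y (fiberMap v p) (fiberMap v q) = fiberMap v ((Y v).op p q) := by
  rcases p with x | a <;> rcases q with y | b
  · rw [hY.base]; rfl
  · rw [hY.act]; rfl
  · rw [op_comm, hY.act]; rfl
  · exact if_pos rfl

lemma mooreOp_of_ne {v w : α} (h : v ≠ w) (a b : A) :
    mooreOp V B π Y (.inr (v, a)) (.inr (w, b)) = .inr (V.op v w, -a - b) := if_neg h

variable [Nonempty α]

/-- Moore's construction. -/
def moore (V : SteinerQuasigroup α) (hY : IsMooreFamily B π Y) : SteinerQuasigroup (X ⊕ α × A) where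
  op := mooreOp V B π Y
  op_self p := by
    rcases p with x | ⟨v, a⟩
    · exact congrArg Sum.inl (B.op_self x)
    · exact (mooreOp_fiberMap hY v (.inr a) (.inr a)).trans (congrArg _ ((Y v).op_self _))
  op_comm p q := by
    rcases fiberMap_cases p q with ⟨v, p, q, rfl, rfl⟩ | ⟨v, w, a, b, h, rfl, rfl⟩
    · rw [mooreOp_fiberMap hY, mooreOp_fiberMap hY, (Y v).op_comm]
    · rw [mooreOp_of_ne h, mooreOp_of_ne h.symm, V.op_comm, neg_sub_comm]
  op_op p q := by
    rcases fiberMap_cases p q with ⟨v, p, q, rfl, rfl⟩ | ⟨v, w, a, b, h, rfl, rfl⟩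
    · rw [mooreOp_fiberMap hY, mooreOp_fiberMap hY, (Y v).op_op]
    · rw [mooreOp_of_ne h, mooreOp_of_ne (left_ne_op h), V.op_op, sub_sub_cancel]

variable (hY : IsMooreFamily B π Y)

lemma isHom_fiberMap (v : α) : (Y v).IsHom (moore V hY) (fiberMap v) := fun p q =>
  (mooreOp_fiberMap hY v p q).symm

lemma isHom_inl : B.IsHom (moore V hY) .inl := fun _ _ => rfl

lemma moore_inl_inr (x : X) (v : α) (a : A) :
    (moore V hY).op (.inl x) (.inr (v, a)) = .inr (v, π x a) := rfl

lemma moore_of_ne {v w : α} (h : v ≠ w) (a b : A) :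
    (moore V hY).op (.inr (v, a)) (.inr (w, b)) = .inr (V.op v w, -a - b) := if_neg h

lemma fst_eq_of_moore_eq_inr {p q r : α × A} (h : (moore V hY).op (.inr p) (.inr q) = .inr r) :
    r.1 = V.op p.1 q.1 := by
  obtain ⟨v, a⟩ := p
  obtain ⟨w, b⟩ := q
  rcases eq_or_ne v w with rfl | hvw
  · rw [V.op_self]
    exact (fiberMap_eq_inr ((isHom_fiberMap hY v (.inr a) (.inr b)).trans h)).symm
  · rw [moore_of_ne hY hvw] at h
    exact congrArg Prod.fst (Sum.inr_injective h).symm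

lemma isHom_moore_of_comp_eq {h : Equiv.Perm α} (hV : V.IsHom V h) (hYh : ∀ v, Y (h v) = Y v) :
    (moore V hY).IsHom (moore V hY)
      ((Equiv.refl X).sumCongr (h.prodCongr (Equiv.refl A))) := by
  intro p q
  have hfiber (v : α) (p : X ⊕ A) :
      (Equiv.refl X).sumCongr (h.prodCongr (Equiv.refl A)) (fiberMap v p) = fiberMap (h v) p := by
    rcases p with x | a <;> rfl
  rcases fiberMap_cases p q with ⟨v, p, q, rfl, rfl⟩ | ⟨v, w, a, b, hvw, rfl, rfl⟩
  · rw [← isHom_fiberMap, hfiber, hfiber, hfiber, ← isHom_fiberMap, hYh]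
  · rw [moore_of_ne hY hvw]
    exact (congrArg (fun z => Sum.inr (z, -a - b)) (hV v w)).trans
      (moore_of_ne hY (h.injective.ne hvw) a b).symm

variable {hY} in
lemma IsHom.moore_ext {f g : X ⊕ α × A → Q} (hf : (moore V hY).IsHom S f)
    (hg : (moore V hY).IsHom S g) (hfg : ∀ p, f (.inr p) = g (.inr p)) : f = g := by
  funext p
  rcases p with x | p
  · let q : X ⊕ α × A := .inr (Classical.arbitrary α, 0)
    rw [← (moore V hY).op_op q (.inl x), hf, hg, op_comm _ q, moore_inl_inr, hfg, hfg]
  · exact hfg p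

end Moore

section MooreQuadrangles

variable {X A α : Type*} [AddCommGroup A] [Nonempty α] [Fintype α] [Fintype A] [Fintype X]
  {V : SteinerQuasigroup α} {B : SteinerQuasigroup X} {π : X → A → A}
  {Y : α → SteinerQuasigroup (X ⊕ A)} (hY : IsMooreFamily B π Y)

lemma card_quads_inl_inr {a : A} {x : X} (ha : ∀ c, π x (-a - c) = -a - π x c) (v : α) :
    (Fintype.card α - 1) * Fintype.card A ≤ #((moore V hY).quads (.inl x) (.inr (v, a))) := by
  have hsub : (univ.erase v ×ˢ univ).map .inr ⊆ (moore V hY).quads (.inl x) (.inr (v, a)) := by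
    simp only [subset_iff, forall_mem_map, mem_product, mem_erase, mem_quads, Prod.forall]
    rintro z c ⟨⟨hzv, -⟩, -⟩
    rw [Function.Embedding.inr_apply, moore_inl_inr, moore_of_ne hY hzv.symm, moore_inl_inr,
      moore_of_ne hY (left_ne_op hzv.symm), V.op_op, ha, hY.involutive, sub_sub_cancel]
  simpa only [card_map, card_product, card_erase_of_mem, mem_univ, card_univ]
    using card_le_card hsub

lemma card_quads_same_fiber_le {v : α} {a b : A} (hab : (a - b) + (a - b) ≠ 0) :
    #((moore V hY).quads (.inr (v, a)) (.inr (v, b))) ≤ Fintype.card X + Fintype.card A := by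
  have hsub : (moore V hY).quads (.inr (v, a)) (.inr (v, b)) ⊆
      (univ : Finset (X ⊕ A)).image (fiberMap v) := by
    rintro (x | ⟨z, c⟩) hr
    · exact mem_image_of_mem (fiberMap v) (mem_univ (Sum.inl x))
    rcases eq_or_ne v z with rfl | hvz
    · exact mem_image_of_mem (fiberMap v) (mem_univ (Sum.inr c))
    rw [mem_quads, moore_of_ne hY hvz, moore_of_ne hY (left_ne_op hvz), V.op_op, moore_of_ne hY hvz,
      moore_of_ne hY (left_ne_op hvz), V.op_op] at hr
    have hc : -b - (-a - (-b - (-a - c))) = c := congrArg Prod.snd (Sum.inr_injective hr)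
    exact absurd (by rw [← sub_eq_zero.mpr hc]; abel) hab
  calc _ ≤ #((univ : Finset (X ⊕ A)).image (fiberMap (α := α) v)) := card_le_card hsub
    _ ≤ Fintype.card (X ⊕ A) := card_image_le
    _ = _ := Fintype.card_sum

lemma fst_mem_quads {p q r r₁ r₂ r₃ : α × A} (h₁ : (moore V hY).op (.inr p) (.inr r) = .inr r₁)
    (h₂ : (moore V hY).op (.inr q) (.inr r₁) = .inr r₂)
    (h₃ : (moore V hY).op (.inr p) (.inr r₂) = .inr r₃)
    (h : .inr r ∈ (moore V hY).quads (.inr p) (.inr q)) : r.1 ∈ V.quads p.1 q.1 := by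
  rw [mem_quads, h₁, h₂, h₃] at h
  rw [mem_quads, ← fst_eq_of_moore_eq_inr hY h₁, ← fst_eq_of_moore_eq_inr hY h₂,
    ← fst_eq_of_moore_eq_inr hY h₃, ← fst_eq_of_moore_eq_inr hY h]

lemma card_quads_ne_fiber_le {v z : α} (hvz : v ≠ z) (a b : A) :
    #((moore V hY).quads (.inr (v, a)) (.inr (z, b))) ≤
      (Fintype.card α - 3) * Fintype.card A + 4 * Fintype.card X := by
  set M := moore V hY
  set p : X ⊕ α × A := .inr (v, a)
  set q : X ⊕ α × A := .inr (z, b)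
  -- A quadrangle that avoids `X` projects to one of `V`; the others meet `X` in one of four places.
  have hsub : M.quads p q ⊆ (V.quads v z ×ˢ univ).image .inr ∪ (univ.image .inl ∪
      univ.image (fun x => M.op p (.inl x)) ∪ univ.image (fun x => M.op p (M.op q (.inl x))) ∪
      univ.image (fun x => M.op p (M.op q (M.op p (.inl x))))) := by
    intro r hr
    simp only [mem_union, mem_image, mem_univ, true_and, and_true, mem_product]
    rcases h₀ : r with x | r₀
    · exact .inr (.inl (.inl (.inl ⟨x, rfl⟩)))
    rcases h₁ : M.op p r with x | r₁
    · exact .inr (.inl (.inl (.inr ⟨x, by rw [← h₁, op_op, h₀]⟩)))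
    rcases h₂ : M.op q (.inr r₁) with x | r₂
    · exact .inr (.inl (.inr ⟨x, by rw [← h₂, op_op, ← h₁, op_op, h₀]⟩))
    rcases h₃ : M.op p (.inr r₂) with x | r₃
    · exact .inr (.inr ⟨x, by rw [← h₃, op_op, ← h₂, op_op, ← h₁, op_op, h₀]⟩)
    subst h₀
    exact .inl ⟨r₀, fst_mem_quads hY h₁ h₂ h₃ hr, rfl⟩
  have himage (f : X → X ⊕ α × A) : #(univ.image f) ≤ Fintype.card X := card_image_le
  calc #(M.quads p q) ≤ #(V.quads v z) * Fintype.card A +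
        (Fintype.card X + Fintype.card X + Fintype.card X + Fintype.card X) := by
        refine (card_le_card hsub).trans <| (card_union_le _ _).trans <| add_le_add
          (card_image_le.trans_eq (card_product _ _)) ?_
        exact (card_union_le _ _).trans <| add_le_add ((card_union_le _ _).trans <|
          add_le_add ((card_union_le _ _).trans <| add_le_add (himage _) (himage _)) (himage _))
          (himage _)
    _ ≤ _ := by
      have := Nat.mul_le_mul_right (Fintype.card A) (card_quads_le (S := V) hvz)
      omega

end MooreQuadrangles

/-! ### Automorphisms of Moore's construction -/

section MooreAutomorphisms

variable {X A α : Type*} [AddCommGroup A]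

lemma exists_affine [Nontrivial α] {V : SteinerQuasigroup α} {f : α → A → A}
    (hf : ∀ v z, v ≠ z → ∀ a b, f (V.op v z) (-a - b) = -f v a - f z b) :
    ∃ (φ : A →+ A) (t : α → A), ∀ v a, f v a = φ a + t v := by
  have hsum (v z : α) (h : v ≠ z) (a b : A) : f v a + f z b = f v (a + b) + f z 0 := by
    have h₁ := hf v z h a b
    have h₂ := hf v z h (a + b) 0
    rw [neg_add', sub_zero, h₁] at h₂
    grind
  have hlinear (v z : α) (h : v ≠ z) (b : A) : f z b - f z 0 = f v b - f v 0 := by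
    have := hsum v z h 0 b
    grind
  obtain ⟨v, z, hvz⟩ := exists_pair_ne α
  refine ⟨AddMonoidHom.mk' (fun a => f v a - f v 0) fun a b => ?_, fun y => f y 0, fun y a => ?_⟩
  · rw [← hlinear v z hvz b]
    have := hsum v z hvz a b
    grind
  · rcases eq_or_ne v y with rfl | h
    · exact (sub_add_cancel _ _).symm
    · exact (sub_eq_iff_eq_add.mp (hlinear v y h a))

variable [Fintype A]

/-- The `a` whose reflection `c ↦ -a - c` commutes with all `π x`. -/
def reflectors (π : X → A → A) : Finset A := {a | ∀ x c, π x (-a - c) = -a - π x c}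

lemma mem_reflectors {π : X → A → A} {a : A} :
    a ∈ reflectors π ↔ ∀ x c, π x (-a - c) = -a - π x c := mem_filter_univ a

variable [Nonempty α] [Fintype α] [Fintype X]
  {V : SteinerQuasigroup α} {B : SteinerQuasigroup X} {π : X → A → A}
  {Y : α → SteinerQuasigroup (X ⊕ A)} {F : Equiv.Perm (X ⊕ α × A)}

/-- Numerical conditions under which the points of `X` are recognised in Moore's construction
by the number of their quadrangles. -/
structure IsRecognizable (α : Type*) [Fintype α] (π : X → A → A) : Prop where
  seven_le_card : 7 ≤ Fintype.card α
  card_lt : Fintype.card A < 3 * Fintype.card X + 3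
  lt_card : 2 * Fintype.card X < Fintype.card A
  card_torsion_le : #{d : A | d + d = 0} ≤ 2
  lt_card_reflectors : Fintype.card X + 2 < Fintype.card α * #(reflectors π)

lemma card_heavy_inl_ge (hY : IsMooreFamily B π Y) (x : X) :
    Fintype.card α * #(reflectors π) ≤
      #((moore V hY).heavy ((Fintype.card α - 1) * Fintype.card A) (.inl x)) := by
  rw [← card_univ, ← card_product, ← card_map .inr]
  refine card_le_card ?_
  simp only [subset_iff, forall_mem_map, mem_product, mem_univ, true_and, Prod.forall, mem_heavy]
  exact fun v a ha => card_quads_inl_inr hY (fun c => mem_reflectors.mp ha x c) v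

lemma card_heavy_inr_le (hY : IsMooreFamily B π Y) (h : IsRecognizable α π) (v : α) (a : A) :
    #((moore V hY).heavy ((Fintype.card α - 1) * Fintype.card A) (.inr (v, a))) ≤
      Fintype.card X + 2 := by
  have hseven := h.seven_le_card
  have hlower := h.lt_card
  have hsub : (moore V hY).heavy ((Fintype.card α - 1) * Fintype.card A) (.inr (v, a)) ⊆
      univ.image .inl ∪ ({d | d + d = 0} : Finset A).image fun d => .inr (v, a - d) := by
    rintro (x | ⟨z, b⟩) hr
    · exact mem_union_left _ (mem_image_of_mem Sum.inl (mem_univ x))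
    obtain ⟨m, hm⟩ := Nat.exists_eq_add_of_le hseven
    rw [mem_heavy, hm, show 7 + m - 1 = m + 6 by omega, add_mul] at hr
    rcases eq_or_ne v z with rfl | hz
    · refine mem_union_right _ (mem_image.mpr ⟨a - b, ?_, by rw [sub_sub_cancel]⟩)
      rw [mem_filter_univ]
      by_contra hab
      have := hr.trans (card_quads_same_fiber_le hY hab)
      omega
    · have := hr.trans (card_quads_ne_fiber_le hY hz a b)
      rw [hm, show 7 + m - 3 = m + 4 by omega, add_mul] at this
      omega
  calc _ ≤ _ := card_le_card hsub
    _ ≤ _ := card_union_le _ _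
    _ ≤ _ := add_le_add card_image_le (card_image_le.trans h.card_torsion_le)

lemma IsHom.exists_apply_inl (hY : IsMooreFamily B π Y) (h : IsRecognizable α π)
    (hF : (moore V hY).IsHom (moore V hY) F) (x : X) : ∃ y, F (.inl x) = .inl y := by
  rcases hx : F (.inl x) with y | ⟨v, a⟩
  · exact ⟨y, rfl⟩
  have hcard := hF.card_heavy ((Fintype.card α - 1) * Fintype.card A) (.inl x)
  rw [hx] at hcard
  have hlt := h.lt_card_reflectors
  have hge := card_heavy_inl_ge (V := V) hY x
  have hle := card_heavy_inr_le (V := V) hY h v a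
  omega

lemma IsHom.exists_apply_inr (hY : IsMooreFamily B π Y) (h : IsRecognizable α π)
    (hF : (moore V hY).IsHom (moore V hY) F) (p : α × A) : ∃ q, F (.inr p) = .inr q := by
  rcases hp : F (.inr p) with y | q
  · obtain ⟨z, hz⟩ := hF.symm.exists_apply_inl hY h y
    rw [← hp, F.symm_apply_apply] at hz
    cases hz
  · exact ⟨q, rfl⟩

/-- `X` is the intersection of any two blocks `X ∪ ({v} × A)`, and these are so small that no
subsystem lies strictly between. -/
lemma IsHom.exists_apply_fiber (hY : IsMooreFamily B π Y) (h : IsRecognizable α π)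
    (hF : (moore V hY).IsHom (moore V hY) F) (v : α) :
    ∃ z, ∀ a, ∃ b, F (.inr (v, a)) = .inr (z, b) := by
  obtain ⟨⟨z, b⟩, hz⟩ := hF.exists_apply_inr hY h (v, 0)
  let base : Finset (X ⊕ α × A) := univ.image .inl
  let block (v : α) : Finset (X ⊕ α × A) := univ.image (fiberMap v)
  have hblock (v : α) : (moore V hY).Closed (block v) :=
    closed_univ.image (isHom_fiberMap hY v)
  have hmem {p : X ⊕ α × A} : p ∈ (block z).image F.symm ↔ F p ∈ block z := by
    simp only [mem_image, F.symm_apply_eq, exists_eq_right]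
  have hbase : base ⊂ block v ∩ (block z).image F.symm := by
    refine (ssubset_iff_of_subset (image_subset_iff.mpr fun x _ => ?_)).mpr ⟨.inr (v, 0), ?_, ?_⟩
    · obtain ⟨y, hy⟩ := hF.exists_apply_inl hY h x
      exact mem_inter.mpr ⟨mem_image_of_mem (fiberMap v) (mem_univ (.inl x)),
        hmem.mpr (hy ▸ mem_image_of_mem (fiberMap z) (mem_univ (.inl y)))⟩
    · exact mem_inter.mpr ⟨mem_image_of_mem (fiberMap v) (mem_univ (.inr 0)),
        hmem.mpr (hz ▸ mem_image_of_mem (fiberMap z) (mem_univ (.inr b)))⟩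
    · simp
  have heq : block v ∩ (block z).image F.symm = block v := by
    refine (closed_univ.image (isHom_inl hY)).eq_of_card_lt
      ((hblock v).inter ((hblock z).image hF.symm)) (hblock v) hbase inter_subset_left ?_
    rw [card_image_of_injective _ (fiberMap_injective v),
      card_image_of_injective _ Sum.inl_injective, card_univ, card_univ, Fintype.card_sum]
    have := h.card_lt
    omega
  refine ⟨z, fun a => ?_⟩
  obtain ⟨⟨z', c⟩, hc⟩ := hF.exists_apply_inr hY h (v, a)
  have ha : F (.inr (v, a)) ∈ block z := hmem.mp
    (inter_eq_left.mp heq (mem_image_of_mem (fiberMap v) (mem_univ (.inr a))))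
  obtain ⟨p, -, hp⟩ := mem_image.mp ha
  obtain rfl := fiberMap_eq_inr (hp.trans hc)
  exact ⟨c, hc⟩

theorem IsHom.exists_apply_eq (hY : IsMooreFamily B π Y) (h : IsRecognizable α π)
    (hF : (moore V hY).IsHom (moore V hY) F) :
    ∃ (k : Equiv.Perm α) (φ : A →+ A) (t : α → A), V.IsHom V k ∧
      ∀ v a, F (.inr (v, a)) = .inr (k v, φ a + t v) := by
  choose k f hkf using hF.exists_apply_fiber hY h
  choose k' f' hkf' using hF.symm.exists_apply_fiber hY h
  have hk : Function.LeftInverse k' k := fun v => by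
    have := F.symm_apply_apply (.inr (v, 0))
    rw [hkf, hkf'] at this
    exact congrArg Prod.fst (Sum.inr_injective this)
  have hop (v z : α) (hvz : v ≠ z) (a b : A) :
      k (V.op v z) = V.op (k v) (k z) ∧ f (V.op v z) (-a - b) = -f v a - f z b := by
    have := hF (.inr (v, a)) (.inr (z, b))
    rw [moore_of_ne hY hvz, hkf, hkf, hkf, moore_of_ne hY (hk.injective.ne hvz)] at this
    exact Prod.mk.inj (Sum.inr_injective this)
  have : Nontrivial α := Fintype.one_lt_card_iff_nontrivial.mp (by have := h.seven_le_card; omega)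
  obtain ⟨φ, t, hφ⟩ := exists_affine fun v z hvz a b => (hop v z hvz a b).2
  refine ⟨.ofBijective k (Finite.injective_iff_bijective.mp hk.injective), φ, t,
    fun v z => ?_, fun v a => by rw [hkf, hφ]; rfl⟩
  rw [Equiv.ofBijective_apply, Equiv.ofBijective_apply, Equiv.ofBijective_apply]
  rcases eq_or_ne v z with rfl | hvz
  · rw [op_self, op_self]
  · exact (hop v z hvz 0 0).1

end MooreAutomorphisms

/-! ### Small systems -/

section Bose

variable {R : Type*} [CommRing R]

/-- The operation of Bose's construction on `R × ZMod 3`, where `h` is the inverse of `2`. -/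
def boseOp (h : R) (p q : R × ZMod 3) : R × ZMod 3 :=
  if p.1 = q.1 then (p.1, -p.2 - q.2)
  else if p.2 = q.2 then (h * (p.1 + q.1), p.2 + 1)
  else if q.2 = p.2 + 1 then (2 * q.1 - p.1, p.2)
  else (2 * p.1 - q.1, q.2)

lemma boseOp_comm (h : R) (p q : R × ZMod 3) : boseOp h p q = boseOp h q p := by
  have hlevel : ∀ i j : ZMod 3, i = j ∨ (i ≠ j ∧ j = i + 1 ∧ i ≠ j + 1) ∨
      (i ≠ j ∧ j ≠ i + 1 ∧ i = j + 1) := by decide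
  rcases eq_or_ne p.1 q.1 with hpq | hpq
  · rw [boseOp, boseOp, if_pos hpq, if_pos hpq.symm, hpq, neg_sub_comm]
  · rw [boseOp, boseOp, if_neg hpq, if_neg hpq.symm]
    rcases hlevel p.2 q.2 with h₁ | ⟨h₁, h₂, h₃⟩ | ⟨h₁, h₂, h₃⟩
    · rw [if_pos h₁, if_pos h₁.symm, h₁, add_comm p.1]
    · rw [if_neg h₁, if_pos h₂, if_neg h₁.symm, if_neg h₃]
    · rw [if_neg h₁, if_neg h₂, if_neg h₁.symm, if_pos h₃]

lemma boseOp_boseOp {h : R} (hh : 2 * h = 1) (p q : R × ZMod 3) :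
    boseOp h p (boseOp h p q) = q := by
  obtain ⟨a, i⟩ := p
  obtain ⟨b, j⟩ := q
  have hlevel : ∀ i j : ZMod 3, i = j ∨ j = i + 1 ∨ (i ≠ j ∧ j ≠ i + 1) := by decide
  have hsucc : ∀ i : ZMod 3, i ≠ i + 1 := by decide
  rcases eq_or_ne a b with rfl | hab
  · simp only [boseOp, if_true, sub_sub_cancel]
  have hmid : a ≠ h * (a + b) := fun he => hab (by linear_combination 2 * he + (a + b) * hh)
  have hleft : a ≠ 2 * b - a := fun he => hab (by linear_combination h * he + (b - a) * hh)
  have hright : a ≠ 2 * a - b := fun he => hab (by linear_combination -he)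
  rcases hlevel i j with rfl | rfl | ⟨h₁, h₂⟩
  · simp only [boseOp, hab, hmid, hsucc, if_true, if_false, Prod.mk.injEq, and_true]
    linear_combination (a + b) * hh
  · simp only [boseOp, hab, hleft, hsucc, if_true, if_false, Prod.mk.injEq, and_true]
    linear_combination b * hh
  · simp only [boseOp, hab, hright, h₁, h₂, if_false, sub_sub_cancel]

/-- Bose's construction. -/
def bose {h : R} (hh : 2 * h = 1) : SteinerQuasigroup (R × ZMod 3) where
  op := boseOp h
  op_self p := by
    have hneg : ∀ i : ZMod 3, -i - i = i := by decide
    rw [boseOp, if_pos rfl, hneg]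
  op_comm := boseOp_comm h
  op_op := boseOp_boseOp hh

end Bose

section Double

variable {P : Type*} (S : SteinerQuasigroup P)

/-- The operation of `double`. -/
def doubleOp : Option (P × Bool) → Option (P × Bool) → Option (P × Bool)
  | none, none => none
  | none, some (a, i) => some (a, !i)
  | some (a, i), none => some (a, !i)
  | some (a, i), some (b, j) =>
    if a = b then if i = j then some (a, i) else none else some (S.op a b, xor i j)

/-- The system of order `2 |P| + 1` containing `S`. -/
def double : SteinerQuasigroup (Option (P × Bool)) where
  op := S.doubleOp
  op_self p := by
    rcases p with _ | ⟨a, i⟩ <;> simp [doubleOp]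
  op_comm p q := by
    rcases p with _ | ⟨a, i⟩ <;> rcases q with _ | ⟨b, j⟩ <;> try rfl
    simp only [doubleOp, S.op_comm b, Bool.xor_comm j, @eq_comm _ b, @eq_comm _ j]
    grind
  op_op p q := by
    rcases p with _ | ⟨a, i⟩ <;> rcases q with _ | ⟨b, j⟩
    · rfl
    · simp only [doubleOp, Bool.not_not]
    · simp [doubleOp]
    rcases eq_or_ne a b with rfl | hab
    · cases i <;> cases j <;> simp [doubleOp]
    · simp [doubleOp, hab, left_ne_op hab, S.op_op]

end Double

section SmallOrders

variable {P : Type*} [Fintype P]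

lemma nonempty_of_card_mod_six (h : Fintype.card P % 6 = 3) : Nonempty (SteinerQuasigroup P) := by
  obtain ⟨k, hk⟩ : ∃ k, Fintype.card P = (2 * k + 1) * 3 := ⟨Fintype.card P / 6, by omega⟩
  have hh : (2 : ZMod (2 * k + 1)) * (k + 1) = 1 := by
    have : ((2 * k + 1 : ℕ) : ZMod (2 * k + 1)) = 0 := ZMod.natCast_self _
    push_cast at this
    linear_combination this
  have e : ZMod (2 * k + 1) × ZMod 3 ≃ P := Fintype.equivOfCardEq (by
    rw [Fintype.card_prod, ZMod.card, ZMod.card, hk])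
  exact ⟨(bose hh).map e⟩

lemma nonempty_of_card_mod_twelve (h : Fintype.card P % 12 = 7) :
    Nonempty (SteinerQuasigroup P) := by
  obtain ⟨S⟩ := nonempty_of_card_mod_six (P := Fin (Fintype.card P / 2)) (by
    rw [Fintype.card_fin]
    omega)
  have e : Option (Fin (Fintype.card P / 2) × Bool) ≃ P := Fintype.equivOfCardEq (by
    rw [Fintype.card_option, Fintype.card_prod, Fintype.card_fin, Fintype.card_bool]
    omega)
  exact ⟨S.double.map e⟩

end SmallOrders

/-! ### Systems from differences -/

section Differences

variable {C ι : Type*} [AddCommGroup C]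

/-- The direction in which a difference with first coordinate `i` is used at the points with first
coordinate `j`. The choice makes the directions at both ends of a difference opposite, and
compatible with the reflection `j ↦ -1 - j`. -/
def forward (i j : ZMod 4) : Bool := if i = 2 then j = 0 ∨ j = 1 else j = 0 ∨ j = 2

lemma forward_neg : ∀ i j : ZMod 4, forward (-i) j = forward i j := by decide

lemma forward_add : ∀ i j : ZMod 4, i ≠ 0 → forward i (j + i) = !forward i j := by decide

lemma forward_sub : ∀ i j : ZMod 4, i ≠ 0 → forward i (j - i) = !forward i j := by decide

lemma forward_reflect : ∀ i j : ZMod 4, i ≠ 0 → forward i (-1 - j) = !forward i j := by decide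

/-- A set of differences in `ZMod 4 × C` covered by the translates of triples `0, d, turn d`. -/
structure DifferenceSet (C : Type*) [AddCommGroup C] where
  carrier : Set (ZMod 4 × C)
  turn : ZMod 4 × C → ZMod 4 × C
  neg_mem : ∀ d ∈ carrier, -d ∈ carrier
  turn_mem : ∀ d ∈ carrier, turn d ∈ carrier
  turn_turn : ∀ d ∈ carrier, turn (turn d) = d
  turn_neg : ∀ d ∈ carrier, turn (-d) = turn d - d
  fst_ne_zero : ∀ d ∈ carrier, d.1 ≠ 0

variable (D : DifferenceSet C)

/-- The differences between points with distinct first coordinates that `D` does not cover. -/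
abbrev DifferenceSet.Rest := {g : ZMod 4 × C // g.1 ≠ 0 ∧ g ∉ D.carrier}

lemma DifferenceSet.neg_mem_iff {d : ZMod 4 × C} : -d ∈ D.carrier ↔ d ∈ D.carrier :=
  ⟨fun h => neg_neg d ▸ D.neg_mem _ h, D.neg_mem d⟩

variable {D}

/-- The involution by which an uncovered difference acts. -/
def shift (g : D.Rest) (p : ZMod 4 × C) : ZMod 4 × C :=
  if forward g.1.1 p.1 then p + g.1 else p - g.1

lemma shift_shift (g : D.Rest) (p : ZMod 4 × C) : shift g (shift g p) = p := by
  cases hf : forward g.1.1 p.1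
  · simp [shift, hf, forward_sub _ _ g.2.1]
  · simp [shift, hf, forward_add _ _ g.2.1]

lemma shift_reflect (g : D.Rest) {a : ZMod 4 × C} (ha : a.1 = 1) (c : ZMod 4 × C) :
    shift g (-a - c) = -a - shift g c := by
  simp only [shift, Prod.fst_sub, Prod.fst_neg, ha, forward_reflect _ _ g.2.1]
  cases forward g.1.1 c.1
  · exact sub_add _ _ _
  · exact sub_sub _ _ _

lemma shift_eq_iff {g : D.Rest} {p q : ZMod 4 × C} :
    shift g p = q ↔ g = if forward (q - p).1 p.1 then q - p else p - q := by
  constructor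
  · rintro rfl
    cases hf : forward g.1.1 p.1 <;> simp [shift, hf, forward_neg]
  · intro h
    cases hf : forward (q - p).1 p.1
    · have hg : g.1 = p - q := h.trans (if_neg (by rw [hf]; decide))
      rw [shift, hg, ← neg_sub q p, Prod.fst_neg, forward_neg, hf]
      simp
    · have hg : g.1 = q - p := h.trans (if_pos hf)
      rw [shift, hg, if_pos hf, add_sub_cancel]

lemma shift_left_injective {g g' : D.Rest} {p : ZMod 4 × C} (h : shift g p = shift g' p) :
    g = g' := Subtype.ext ((shift_eq_iff.mp h).trans (shift_eq_iff.mp rfl).symm)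

lemma exists_shift_eq_iff {p q : ZMod 4 × C} :
    (∃ g : D.Rest, shift g p = q) ↔ p.1 ≠ q.1 ∧ q - p ∉ D.carrier := by
  simp only [shift_eq_iff, Subtype.exists, exists_prop, exists_eq_right]
  split_ifs
  · rw [Prod.fst_sub, sub_ne_zero, ne_comm]
  · rw [Prod.fst_sub, sub_ne_zero, ← neg_sub q p, D.neg_mem_iff]

variable (D) in
/-- The product of two points of `ZMod 4 × C`: pairs in a level are completed by `S`, pairs with
difference in `D` by `D`, and the remaining pairs by their difference. -/
def levelOp (S : ZMod 4 → SteinerQuasigroup C) (p q : ZMod 4 × C) : D.Rest ⊕ ZMod 4 × C :=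
  if h : ∃ g : D.Rest, shift g p = q then .inl h.choose
  else if p.1 = q.1 then .inr (p.1, (S p.1).op p.2 q.2)
  else .inr (p + D.turn (q - p))

lemma levelOp_shift (S : ZMod 4 → SteinerQuasigroup C) (p : ZMod 4 × C) (g : D.Rest) :
    levelOp D S p (shift g p) = .inl g := by
  have h : ∃ g' : D.Rest, shift g' p = shift g p := ⟨g, rfl⟩
  rw [levelOp, dif_pos h, shift_left_injective h.choose_spec]

lemma levelOp_level (S : ZMod 4 → SteinerQuasigroup C) (i : ZMod 4) (a b : C) :
    levelOp D S (i, a) (i, b) = .inr (i, (S i).op a b) := by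
  rw [levelOp, dif_neg (by rw [exists_shift_eq_iff]; simp), if_pos rfl]

lemma levelOp_add (S : ZMod 4 → SteinerQuasigroup C) (p : ZMod 4 × C) {d : ZMod 4 × C}
    (hd : d ∈ D.carrier) : levelOp D S p (p + d) = .inr (p + D.turn d) := by
  rw [levelOp, dif_neg fun h => (exists_shift_eq_iff.mp h).2 (by rwa [add_sub_cancel_left]),
    if_neg (by simp [D.fst_ne_zero d hd]), add_sub_cancel_left]

variable (D) in
lemma levelOp_cases (p q : ZMod 4 × C) :
    (∃ g : D.Rest, q = shift g p) ∨ (∃ i a b, p = (i, a) ∧ q = (i, b)) ∨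
      ∃ d ∈ D.carrier, q = p + d := by
  by_cases hlevel : p.1 = q.1
  · exact .inr (.inl ⟨p.1, p.2, q.2, rfl, by rw [hlevel]⟩)
  by_cases hmem : q - p ∈ D.carrier
  · exact .inr (.inr ⟨q - p, hmem, (add_sub_cancel p q).symm⟩)
  · obtain ⟨g, hg⟩ := exists_shift_eq_iff.mpr ⟨hlevel, hmem⟩
    exact .inl ⟨g, hg.symm⟩

/-- The Steiner quasigroup on the uncovered differences and `ZMod 4 × C`. -/
def level (B : SteinerQuasigroup D.Rest) (S : ZMod 4 → SteinerQuasigroup C) :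
    SteinerQuasigroup (D.Rest ⊕ ZMod 4 × C) where
  op
    | .inl x, .inl y => .inl (B.op x y)
    | .inl x, .inr p => .inr (shift x p)
    | .inr p, .inl x => .inr (shift x p)
    | .inr p, .inr q => levelOp D S p q
  op_self p := by
    rcases p with x | ⟨i, a⟩
    · exact congrArg Sum.inl (B.op_self x)
    · exact (levelOp_level S i a a).trans (by rw [op_self])
  op_comm p q := by
    rcases p with x | p <;> rcases q with y | q
    · exact congrArg Sum.inl (B.op_comm x y)
    · rfl
    · rfl
    rcases levelOp_cases D p q with ⟨g, rfl⟩ | ⟨i, a, b, rfl, rfl⟩ | ⟨d, hd, rfl⟩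
    · have := levelOp_shift S (shift g p) g
      rw [shift_shift] at this
      exact (levelOp_shift S p g).trans this.symm
    · simp only [levelOp_level, (S i).op_comm]
    · have := levelOp_add S (p + d) (D.neg_mem d hd)
      rw [add_neg_cancel_right, D.turn_neg d hd, add_add_sub_cancel] at this
      exact (levelOp_add S p hd).trans this.symm
  op_op p q := by
    rcases p with x | p <;> rcases q with y | q
    · exact congrArg Sum.inl (B.op_op x y)
    · exact congrArg Sum.inr (shift_shift x q)
    · exact levelOp_shift S p y
    rcases levelOp_cases D p q with ⟨g, rfl⟩ | ⟨i, a, b, rfl, rfl⟩ | ⟨d, hd, rfl⟩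
    · simp only [levelOp_shift]
    · simp only [levelOp_level, (S i).op_op]
    · simp only [levelOp_add S p hd, levelOp_add S p (D.turn_mem d hd), D.turn_turn d hd]

lemma isMooreFamily_level {α : Type*} (B : SteinerQuasigroup D.Rest)
    (S : α → ZMod 4 → SteinerQuasigroup C) : IsMooreFamily B shift fun v => level B (S v) where
  base _ _ _ := rfl
  act _ _ _ := rfl

/-- The differences of the triples `(0, 0), (1, x j), (2, x j + y j)`. -/
def tripleDifferences (x y : ι → C) (p : Fin 6 × ι) : ZMod 4 × C :=
  ![(1, x p.2), (1, y p.2), -(1, x p.2), -(1, y p.2), (2, x p.2 + y p.2), -(2, x p.2 + y p.2)] p.1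

/-- The label of the opposite difference in `tripleDifferences`. -/
def negLabel : Fin 6 → Fin 6 := ![2, 3, 0, 1, 5, 4]

/-- The label of the difference following a given one in `tripleDifferences`. -/
def turnLabel : Fin 6 → Fin 6 := ![4, 2, 1, 5, 0, 3]

variable {x y : ι → C}

lemma tripleDifferences_negLabel (l : Fin 6) (j : ι) :
    tripleDifferences x y (negLabel l, j) = -tripleDifferences x y (l, j) := by
  fin_cases l <;> simp [tripleDifferences, negLabel]

lemma tripleDifferences_turnLabel (l : Fin 6) (j : ι) :
    tripleDifferences x y (turnLabel (negLabel l), j) =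
      tripleDifferences x y (turnLabel l, j) - tripleDifferences x y (l, j) := by
  have h2 : (2 : ZMod 4) = 1 + 1 := by decide
  fin_cases l <;> simp [tripleDifferences, negLabel, turnLabel, h2, sub_eq_add_neg, add_comm]

lemma tripleDifferences_injective (hxy : (Sum.elim x y).Injective) (hsum : (x + y).Injective)
    (hneg : ∀ i j, x i + y i ≠ -(x j + y j)) : (tripleDifferences x y).Injective := by
  obtain ⟨hx, hy, hne⟩ := Sum.elim_injective.mp hxy
  have hsum_iff (i j : ι) : x i + y i = x j + y j ↔ i = j := hsum.eq_iff
  have hneg' (i j : ι) : -(x i + y i) ≠ x j + y j := (hneg j i).symm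
  have h₁ : (1 : ZMod 4) ≠ -1 := by decide
  have h₂ : (1 : ZMod 4) ≠ 2 ∧ (1 : ZMod 4) ≠ -2 ∧ (-1 : ZMod 4) ≠ 2 := by decide
  rintro ⟨l, i⟩ ⟨m, j⟩ h
  fin_cases l <;> fin_cases m <;>
    simp_all [tripleDifferences, -neg_add_rev, hx.eq_iff, hy.eq_iff, h₁.symm, h₂.1.symm,
      h₂.2.1.symm, h₂.2.2.symm, (hne _ _).symm]

/-- The differences of the triples `(0, 0), (1, x j), (2, x j + y j)` as a difference set. -/
def DifferenceSet.ofTriples (h : (tripleDifferences x y).Injective) : DifferenceSet C where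
  carrier := Set.range (tripleDifferences x y)
  turn := Function.extend (tripleDifferences x y)
    (fun p => tripleDifferences x y (turnLabel p.1, p.2)) id
  neg_mem := by
    rintro _ ⟨⟨l, j⟩, rfl⟩
    exact ⟨_, tripleDifferences_negLabel l j⟩
  turn_mem := by
    rintro _ ⟨p, rfl⟩
    rw [h.extend_apply]
    exact ⟨_, rfl⟩
  turn_turn := by
    rintro _ ⟨⟨l, j⟩, rfl⟩
    rw [h.extend_apply, h.extend_apply]
    fin_cases l <;> rfl
  turn_neg := by
    rintro _ ⟨⟨l, j⟩, rfl⟩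
    rw [← tripleDifferences_negLabel, h.extend_apply, h.extend_apply, tripleDifferences_turnLabel]
  fst_ne_zero := by
    rintro _ ⟨⟨l, j⟩, rfl⟩
    have h : (1 : ZMod 4) ≠ 0 ∧ (2 : ZMod 4) ≠ 0 := by decide
    fin_cases l <;> simp [tripleDifferences, h]

lemma DifferenceSet.card_rest_ofTriples [Fintype C] [Fintype ι]
    (h : (tripleDifferences x y).Injective) :
    Fintype.card (ofTriples h).Rest + 6 * Fintype.card ι = 3 * Fintype.card C := by
  let cross : Finset (ZMod 4 × C) := {g | g.1 ≠ 0}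
  have hcross : cross = ({i | i ≠ 0} : Finset (ZMod 4)) ×ˢ univ := by
    ext
    simp [cross]
  have hrest : ({g | g.1 ≠ 0 ∧ g ∉ (ofTriples h).carrier} : Finset (ZMod 4 × C)) =
      cross \ univ.image (tripleDifferences x y) := by
    ext
    simp [ofTriples, cross]
  have hsub : univ.image (tripleDifferences x y) ⊆ cross := image_subset_iff.mpr fun p _ =>
    (mem_filter_univ _).mpr ((ofTriples h).fst_ne_zero _ (Set.mem_range_self p))
  have hthree : #({i | i ≠ 0} : Finset (ZMod 4)) = 3 := by decide
  have hsix : #(univ.image (tripleDifferences x y)) = 6 * Fintype.card ι := by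
    rw [card_image_of_injective _ h, card_univ, Fintype.card_prod, Fintype.card_fin]
  rw [Fintype.card_subtype, hrest, ← hsix, card_sdiff_add_card_eq_card hsub, hcross, card_product,
    hthree, card_univ]

lemma tripleDifferences_natCast_injective {w t : ℕ} (hw : Odd w) (ht : 3 * t ≤ w) :
    (tripleDifferences (fun j : Fin t => ((j : ℕ) : ZMod w)) fun j => (t + j : ℕ)).Injective := by
  have hcast {a b : ℕ} (ha : a < w) (hb : b < w) (h : (a : ZMod w) = b) : a = b :=
    CharP.natCast_injOn_Iio (ZMod w) w ha hb h
  have htwo : IsUnit (2 : ZMod w) := by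
    simpa using (ZMod.isUnit_iff_coprime 2 w).mpr (Nat.coprime_two_left.mpr hw)
  have hdouble {a b : ℕ} (ha : a < w) (hb : b < w) (h : (2 * a : ZMod w) = 2 * b) : a = b :=
    hcast ha hb (htwo.mul_left_cancel h)
  refine tripleDifferences_injective
    (Function.Injective.sumElim (fun i j h => ?_) (fun i j h => ?_) fun i j h => ?_)
    (fun i j h => ?_) fun i j h => ?_
  · exact Fin.ext (hcast (by omega) (by omega) h)
  · have := hcast (by omega) (by omega) h
    omega
  · have := hcast (by omega) (by omega) h
    omega
  · refine Fin.ext (hdouble (by omega) (by omega) ?_)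
    simp only [Pi.add_apply, Nat.cast_add] at h
    linear_combination h
  · have hpos := i.pos
    have := hdouble (a := t + i + j) (b := 0) (by omega) (by omega) (by
      push_cast at h ⊢
      linear_combination h)
    omega

end Differences

/-! ### Twisted levels -/

section Twist

variable {P R : Type*}

lemma IsHom.inv_mul_mul_eq [Fintype P] {s : SteinerQuasigroup P} {f σ σ' τ τ' : Equiv.Perm P}
    (hσ : (s.map σ).IsHom (s.map σ') f) (hτ : (s.map τ).IsHom (s.map τ') f)
    (hcard : 2 * (#σ.support + #σ'.support + #τ.support + #τ'.support) ≤ Fintype.card P) :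
    σ'⁻¹ * f * σ = τ'⁻¹ * f * τ := by
  have hσs : s.IsHom s (σ'⁻¹ * f * σ) := (isHom_map s σ').symm.comp hσ |>.comp (isHom_map s σ)
  have hτs : s.IsHom s (τ'⁻¹ * f * τ) := (isHom_map s τ').symm.comp hτ |>.comp (isHom_map s τ)
  let moved : Finset P := (σ.support ∪ σ'.support.image f.symm) ∪
    (τ.support ∪ τ'.support.image f.symm)
  have hfix : movedᶜ ⊆ ({a | (σ'⁻¹ * f * σ) a = (τ'⁻¹ * f * τ) a} : Finset P) := by
    intro a ha
    simp only [moved, mem_compl, mem_union, not_or, mem_image, f.symm_apply_eq, exists_eq_right,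
      Equiv.Perm.notMem_support] at ha
    rw [mem_filter_univ]
    simp only [Equiv.Perm.mul_apply, ha]
    rw [Equiv.Perm.inv_eq_iff_eq.mpr ha.1.2.symm, Equiv.Perm.inv_eq_iff_eq.mpr ha.2.2.symm]
  have hmoved : #moved ≤ #σ.support + #σ'.support + #τ.support + #τ'.support := by
    refine (card_union_le _ _).trans ((add_le_add ((card_union_le _ _).trans
      (add_le_add_right card_image_le _)) ((card_union_le _ _).trans
      (add_le_add_right card_image_le _))).trans_eq (add_assoc _ _ _).symm)
  refine DFunLike.coe_injective (hσs.eq_of_card_le hτs ?_)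
  have := card_le_card hfix
  rw [card_compl] at this
  omega

variable [Ring R] {p p' : R}

/-- The permutation by which the level `i` is twisted. Two levels are left alone; the two others
are twisted by transpositions that determine the mark `p`. -/
def twist (p : R) (i : ZMod 4) : Equiv.Perm R :=
  if i = 2 then Equiv.swap 0 1 else if i = 3 then Equiv.swap 0 p else 1

lemma twist_zero (p : R) : twist p 0 = 1 := rfl

lemma twist_one (p : R) : twist p 1 = 1 := rfl

lemma twist_two (p : R) : twist p 2 = Equiv.swap 0 1 := rfl

lemma twist_three (p : R) : twist p 3 = Equiv.swap 0 p := rfl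

lemma card_support_twist_le [Fintype R] (p : R) (i : ZMod 4) : #(twist p i).support ≤ 2 := by
  have hswap (q : R) : #(Equiv.swap 0 q).support ≤ 2 := by
    rcases eq_or_ne 0 q with rfl | hq
    · simp
    · exact (Equiv.Perm.card_support_swap hq).le
  unfold twist
  split_ifs
  · exact hswap 1
  · exact hswap p
  · simp

lemma eq_zero_or_one_of_twist_eq (h₀ : p ≠ 0) (h₁ : p ≠ 1) {i j : ZMod 4} (hij : i ≠ j)
    (h : twist p i = twist p j) : i = 0 ∧ j = 1 ∨ i = 1 ∧ j = 0 := by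
  have : Nontrivial R := nontrivial_of_ne p 0 h₀
  have hvalue (i : ZMod 4) : twist p i 0 = if i = 2 then 1 else if i = 3 then p else 0 := by
    unfold twist
    split_ifs <;> simp
  have himage : twist p i 0 = twist p j 0 := by rw [h]
  rw [hvalue, hvalue] at himage
  have hi : (i ≠ 2 ∧ i ≠ 3) ∧ j ≠ 2 ∧ j ≠ 3 := by
    split_ifs at himage <;> simp_all
  clear * - hij hi
  decide +revert

lemma eq_of_swap_eq_swap {a b c z q r : P} (hab : a ≠ b) (hac : a ≠ c) (hqr : q ≠ r)
    (h : Equiv.swap a b = Equiv.swap z q) (h' : Equiv.swap a c = Equiv.swap z r) :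
    a = z ∧ b = q ∧ c = r := by
  have hq : Equiv.swap z q a ≠ a := by rwa [← h, Equiv.swap_apply_left, ne_comm]
  have hr : Equiv.swap z r a ≠ a := by rwa [← h', Equiv.swap_apply_left, ne_comm]
  obtain rfl : a = z := (Equiv.swap_apply_ne_self_iff.mp hq).2.resolve_right fun haq =>
    (Equiv.swap_apply_ne_self_iff.mp hr).2.elim (fun haz => (Equiv.swap_apply_ne_self_iff.mp hq).1
      (haz.symm.trans haq)) fun har => hqr (haq.symm.trans har)
  exact ⟨rfl, by simpa using DFunLike.congr_fun h a, by simpa using DFunLike.congr_fun h' a⟩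

variable [Fintype R] {s : SteinerQuasigroup R} {f : Equiv.Perm R} {κ d : ZMod 4}

lemma eq_zero_or_one_and_mul_twist_eq (hcard : 16 ≤ Fintype.card R) (h₀' : p' ≠ 0) (h₁' : p' ≠ 1)
    (hκ : κ ≠ 0) (h : ∀ i, (s.map (twist p i)).IsHom (s.map (twist p' (κ * i + d))) f) :
    (κ + d = 0 ∧ d = 1 ∨ κ + d = 1 ∧ d = 0) ∧
      ∀ i, f * twist p i = twist p' (κ * i + d) * f := by
  have hconj (i : ZMod 4) : (twist p' (κ * i + d))⁻¹ * f * twist p i = (twist p' d)⁻¹ * f := by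
    have hsupport := card_support_twist_le p
    have hsupport' := card_support_twist_le p'
    have := (h i).inv_mul_mul_eq (h 0) (by
      linarith [hsupport i, hsupport 0, hsupport' (κ * i + d), hsupport' (κ * 0 + d)])
    rwa [mul_zero, zero_add, twist_zero, mul_one] at this
  have hlevels : κ + d = 0 ∧ d = 1 ∨ κ + d = 1 ∧ d = 0 := by
    refine eq_zero_or_one_of_twist_eq h₀' h₁' (by simpa using hκ) (inv_injective ?_)
    simpa only [mul_one, twist_one, mul_left_inj] using hconj 1
  have hd : twist p' d = 1 := by
    rcases hlevels with ⟨-, rfl⟩ | ⟨-, rfl⟩ <;> rfl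
  refine ⟨hlevels, fun i => ?_⟩
  have := hconj i
  rwa [hd, inv_one, one_mul, mul_assoc, inv_mul_eq_iff_eq_mul] at this

theorem twist_rigid (hcard : 16 ≤ Fintype.card R) (h₀ : p ≠ 0) (h₀' : p' ≠ 0) (h₁' : p' ≠ 1)
    (hpp' : p' * p ≠ 1) {k b : R} (hf : ∀ a, f a = k * a + b) (hκ : κ ≠ 0)
    (h : ∀ i, (s.map (twist p i)).IsHom (s.map (twist p' (κ * i + d))) f) :
    f = 1 ∧ κ = 1 ∧ d = 0 ∧ p = p' := by
  have : Nontrivial R := nontrivial_of_ne p 0 h₀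
  obtain ⟨hlevels, hmul⟩ := eq_zero_or_one_and_mul_twist_eq hcard h₀' h₁' hκ h
  have hswap {i : ZMod 4} {x y : R} (hi : twist p i = Equiv.swap x y) :
      Equiv.swap (f x) (f y) = twist p' (κ * i + d) := by
    have := hmul i
    rw [hi, Equiv.mul_swap_eq_swap_mul] at this
    exact mul_right_cancel this
  have h₂ := hswap (twist_two p)
  have h₃ := hswap (twist_three p)
  have hcases : (κ = 1 ∧ d = 0) ∨ (κ * 2 + d = 3 ∧ κ * 3 + d = 2) := by
    clear * - hlevels
    revert κ d
    decide
  have hf₁ : f 0 ≠ f 1 := f.injective.ne zero_ne_one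
  have hf₂ : f 0 ≠ f p := f.injective.ne h₀.symm
  rcases hcases with ⟨rfl, rfl⟩ | ⟨e₂, e₃⟩
  · obtain ⟨hz, ho, hp⟩ := eq_of_swap_eq_swap hf₁ hf₂ h₁'.symm h₂ h₃
    have hid : f = 1 := Equiv.ext fun a => by
      rw [hf, mul_zero, zero_add] at hz
      rw [hf, hz, mul_one, add_zero] at ho
      rw [hf, ho, hz, one_mul, add_zero, Equiv.Perm.one_apply]
    exact ⟨hid, rfl, rfl, by simpa [hid] using hp⟩
  · rw [e₂, twist_three] at h₂
    rw [e₃, twist_two] at h₃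
    obtain ⟨hz, ho, hp⟩ := eq_of_swap_eq_swap hf₁ hf₂ h₁' h₂ h₃
    rw [hf, mul_zero, zero_add] at hz
    rw [hf, hz, mul_one, add_zero] at ho
    rw [hf, hz, ho, add_zero] at hp
    exact absurd hp hpp'

end Twist

/-! ### Realizing colour-preserving automorphism groups -/

section Realizes

variable {α γ δ Q R : Type*}

/-- `φ` embeds `V` in `S` in such a way that restriction identifies `Aut S` with the group of
automorphisms of `V` preserving the colouring `c`. -/
structure Realizes (V : SteinerQuasigroup α) (c : α → γ) (S : SteinerQuasigroup Q)
    (φ : α → Q) : Prop where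
  injective : Function.Injective φ
  isHom : V.IsHom S φ
  restrict : ∀ g : Equiv.Perm Q, S.IsHom S g →
    ∃ h : Equiv.Perm α, V.IsHom V h ∧ (∀ x, c (h x) = c x) ∧ ∀ x, g (φ x) = φ (h x)
  extend : ∀ h : Equiv.Perm α, V.IsHom V h → (∀ x, c (h x) = c x) →
    ∃! g : Equiv.Perm Q, S.IsHom S g ∧ ∀ x, g (φ x) = φ (h x)

variable {V : SteinerQuasigroup α} {c : α → γ} {S : SteinerQuasigroup Q} {φ : α → Q}

lemma Realizes.map (h : Realizes V c S φ) (e : Q ≃ R) : Realizes V c (S.map e) (e ∘ φ) where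
  injective := e.injective.comp h.injective
  isHom := (S.isHom_map e).comp h.isHom
  restrict g hg := by
    obtain ⟨k, hk, hc, hx⟩ := h.restrict (e.trans (g.trans e.symm))
      ((S.isHom_map e).symm.comp (hg.comp (S.isHom_map e)))
    exact ⟨k, hk, hc, fun x => (e.symm_apply_eq.mp (hx x))⟩
  extend k hk hc := by
    obtain ⟨g, ⟨hg, hx⟩, huniq⟩ := h.extend k hk hc
    refine ⟨e.symm.trans (g.trans e),
      ⟨(S.isHom_map e).comp (hg.comp (S.isHom_map e).symm), fun x => by simp [hx]⟩, ?_⟩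
    rintro g' ⟨hg', hx'⟩
    rw [← huniq (e.trans (g'.trans e.symm)) ⟨(S.isHom_map e).symm.comp
      (hg'.comp (S.isHom_map e)), fun x => e.symm_apply_eq.mpr (hx' x)⟩]
    ext
    simp

lemma Realizes.of_comp {f : γ → δ} (hf : (Set.range c).InjOn f) (h : Realizes V (f ∘ c) S φ) :
    Realizes V c S φ where
  injective := h.injective
  isHom := h.isHom
  restrict g hg := by
    obtain ⟨k, hk, hc, hx⟩ := h.restrict g hg
    exact ⟨k, hk, fun x => hf (Set.mem_range_self _) (Set.mem_range_self x) (hc x), hx⟩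
  extend k hk hc := h.extend k hk fun x => congrArg f (hc x)

end Realizes

section ColourMoore

lemma card_add_self_eq_zero_le {C : Type*} [AddCommGroup C] [Fintype C]
    (hC : Odd (Fintype.card C)) : #{d : ZMod 4 × C | d + d = 0} ≤ 2 := by
  have hinj := (Nat.card_eq_fintype_card (α := C) ▸
    Nat.coprime_two_right.mpr hC : (Nat.card C).Coprime 2).nsmul_right_bijective.injective
  have hlevel (i : ZMod 4) : i + i = 0 → i = 0 ∨ i = 2 := by decide +revert
  have hsub : ({d | d + d = 0} : Finset (ZMod 4 × C)) ⊆ {(0, 0), (2, 0)} := by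
    rintro ⟨i, a⟩ hd
    rw [mem_filter_univ, Prod.mk_add_mk, Prod.mk_eq_zero] at hd
    obtain rfl : a = 0 := hinj (by simpa only [two_nsmul, add_zero] using hd.2)
    rcases hlevel i hd.1 with rfl | rfl <;> simp
  exact (card_le_card hsub).trans card_le_two

lemma isRecognizable_shift {α C : Type*} [Fintype α] [AddCommGroup C] [Fintype C]
    {D : DifferenceSet C} (hα : 7 ≤ Fintype.card α) (hC : Odd (Fintype.card C))
    (hlower : 4 * Fintype.card C < 3 * Fintype.card D.Rest + 3)
    (hupper : Fintype.card D.Rest < 2 * Fintype.card C) :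
    IsRecognizable α (shift (D := D)) where
  seven_le_card := hα
  card_lt := by rwa [Fintype.card_prod, ZMod.card]
  lt_card := by
    rw [Fintype.card_prod, ZMod.card]
    omega
  card_torsion_le := by convert card_add_self_eq_zero_le hC
  lt_card_reflectors := by
    have hreflectors : Fintype.card C ≤ #(reflectors (shift (D := D))) := by
      rw [← card_univ, ← card_image_of_injective univ (Prod.mk_right_injective (1 : ZMod 4))]
      exact card_le_card (image_subset_iff.mpr fun a _ => mem_reflectors.mpr fun g c =>
        shift_reflect g rfl c)
    have := Nat.mul_le_mul hα hreflectors
    omega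

lemma addMonoidHom_zmod_eq_zero {m n : ℕ} (h : m.Coprime n) (f : ZMod m →+ ZMod n) : f = 0 := by
  ext a
  have hm : (m : ZMod n) * f a = 0 := by
    rw [← nsmul_eq_mul, ← map_nsmul, nsmul_eq_mul, CharP.cast_eq_zero, zero_mul, map_zero]
  exact ((ZMod.isUnit_iff_coprime m n).mpr h).mul_right_eq_zero.mp hm

lemma exists_addMonoidHom_prod_zmod_eq {m n : ℕ} (h : m.Coprime n)
    (f : ZMod m × ZMod n →+ ZMod m × ZMod n) : ∃ κ k, ∀ i a, f (i, a) = (κ * i, k * a) := by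
  have hmul {l : ℕ} (f : ZMod l →+ ZMod l) (a : ZMod l) : f a = f 1 * a := by
    rw [mul_comm, ← smul_eq_mul, ← ZMod.map_smul, smul_eq_mul, mul_one]
  let fst := AddMonoidHom.fst (ZMod m) (ZMod n)
  let snd := AddMonoidHom.snd (ZMod m) (ZMod n)
  let inl := AddMonoidHom.inl (ZMod m) (ZMod n)
  let inr := AddMonoidHom.inr (ZMod m) (ZMod n)
  have hfst (a : ZMod n) : (f (0, a)).1 = 0 :=
    DFunLike.congr_fun (addMonoidHom_zmod_eq_zero h.symm (fst.comp (f.comp inr))) a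
  have hsnd (i : ZMod m) : (f (i, 0)).2 = 0 :=
    DFunLike.congr_fun (addMonoidHom_zmod_eq_zero h (snd.comp (f.comp inl))) i
  refine ⟨(f (1, 0)).1, (f (0, 1)).2, fun i a => ?_⟩
  rw [← add_zero i, ← zero_add a, ← Prod.mk_add_mk, map_add]
  refine Prod.ext ?_ ?_
  · rw [Prod.fst_add, hfst, add_zero, add_zero]
    exact hmul (fst.comp (f.comp inl)) i
  · rw [Prod.snd_add, hsnd, zero_add, zero_add]
    exact hmul (snd.comp (f.comp inr)) a

variable {α : Type*} [Nonempty α] {w : ℕ} {D : DifferenceSet (ZMod w)}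

/-- Moore's construction with levels twisted according to the marks `m v`. -/
def colourMoore (V : SteinerQuasigroup α) (m : α → ZMod w) (s : SteinerQuasigroup (ZMod w))
    (B : SteinerQuasigroup D.Rest) : SteinerQuasigroup (D.Rest ⊕ α × (ZMod 4 × ZMod w)) :=
  moore V (isMooreFamily_level B fun v i => s.map (twist (m v) i))

variable {V : SteinerQuasigroup α} {m : α → ZMod w} {s : SteinerQuasigroup (ZMod w)}
  {B : SteinerQuasigroup D.Rest}

lemma colourMoore_level (v : α) (i : ZMod 4) (a b : ZMod w) :
    (colourMoore V m s B).op (.inr (v, i, a)) (.inr (v, i, b)) =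
      .inr (v, i, (s.map (twist (m v) i)).op a b) :=
  (isHom_fiberMap (V := V) (isMooreFamily_level B fun v i => s.map (twist (m v) i)) v
    (.inr (i, a)) (.inr (i, b))).symm.trans (congrArg (fiberMap v)
      (levelOp_level (fun i => s.map (twist (m v) i)) i a b))

variable [NeZero w]

lemma IsHom.colourMoore_rigid (hw16 : 16 ≤ w) (h₀ : ∀ v, m v ≠ 0) (h₁ : ∀ v z, m v * m z ≠ 1)
    (h₁' : ∀ v, m v ≠ 1) {F : D.Rest ⊕ α × (ZMod 4 × ZMod w) → D.Rest ⊕ α × (ZMod 4 × ZMod w)}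
    (hF : (colourMoore V m s B).IsHom (colourMoore V m s B) F) {h : α → α}
    {t : α → ZMod 4 × ZMod w} {κ : ZMod 4} {k : ZMod w} (hκ : κ ≠ 0)
    (hk : Function.Injective (k * ·))
    (hF_apply : ∀ v i a, F (.inr (v, i, a)) = .inr (h v, κ * i + (t v).1, k * a + (t v).2))
    (v : α) :
    (∀ p, F (.inr (v, p)) = .inr (h v, p)) ∧ m v = m (h v) := by
  let f : Equiv.Perm (ZMod w) := (Equiv.ofBijective _
    (Finite.injective_iff_bijective.mp hk)).trans (Equiv.addRight (t v).2)
  obtain ⟨hf, hκ, hd, hm⟩ := twist_rigid (f := f) (by rwa [ZMod.card]) (h₀ v) (h₀ (h v))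
    (h₁' (h v)) (h₁ (h v) v) (fun _ => rfl) hκ fun i a b => by
      have := hF (.inr (v, i, a)) (.inr (v, i, b))
      rw [colourMoore_level, hF_apply, hF_apply, hF_apply, colourMoore_level] at this
      exact congrArg (·.2.2) (Sum.inr_injective this)
  refine ⟨fun ⟨i, a⟩ => ?_, hm⟩
  have ha : k * a + (t v).2 = a := DFunLike.congr_fun hf a
  rw [hF_apply, hκ, hd, ha, one_mul, add_zero]

variable [Fintype α]

lemma IsHom.exists_colourMoore_apply_eq (hw : Odd w) (hw16 : 16 ≤ w)
    (hD : IsRecognizable α (shift (D := D))) (h₀ : ∀ v, m v ≠ 0) (h₁ : ∀ v z, m v * m z ≠ 1)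
    (h₁' : ∀ v, m v ≠ 1) {F : Equiv.Perm (D.Rest ⊕ α × (ZMod 4 × ZMod w))}
    (hF : (colourMoore V m s B).IsHom (colourMoore V m s B) F) :
    ∃ k : Equiv.Perm α, V.IsHom V k ∧ (∀ v, m (k v) = m v) ∧
      ∀ v p, F (.inr (v, p)) = .inr (k v, p) := by
  obtain ⟨h, φ, t, hh, hFφ⟩ := hF.exists_apply_eq _ hD
  have hcoprime : Nat.Coprime 4 w :=
    Nat.Coprime.pow_left 2 (Nat.coprime_two_left.mpr hw)
  obtain ⟨κ, k, hφ⟩ := exists_addMonoidHom_prod_zmod_eq hcoprime φ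
  have hφinj : Function.Injective φ := fun p q hpq => by
    have : F (.inr (Classical.arbitrary α, p)) = F (.inr (Classical.arbitrary α, q)) := by
      rw [hFφ, hFφ, hpq]
    exact congrArg Prod.snd (Sum.inr_injective (F.injective this))
  have hκ : κ ≠ 0 := by
    rintro rfl
    have h10 : φ (1, 0) = φ (0, 0) := by rw [hφ, hφ, zero_mul, zero_mul]
    exact absurd (congrArg Prod.fst (hφinj h10)) (by decide : (1 : ZMod 4) ≠ 0)
  have hk : Function.Injective (k * ·) := fun a b (hab : k * a = k * b) =>
    congrArg Prod.snd (hφinj (by rw [hφ, hφ, hab] : φ (0, a) = φ (0, b)))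
  have hrigid := hF.colourMoore_rigid hw16 h₀ h₁ h₁' (t := t) hκ hk fun v i a => by
    rw [hFφ, hφ]
    rfl
  exact ⟨h, hh, fun v => (hrigid v).2.symm, fun v => (hrigid v).1⟩

theorem realizes_colourMoore (hw : Odd w) (hw16 : 16 ≤ w) (hD : IsRecognizable α (shift (D := D)))
    (h₀ : ∀ v, m v ≠ 0) (h₁ : ∀ v z, m v * m z ≠ 1) (h₁' : ∀ v, m v ≠ 1) :
    Realizes V m (colourMoore V m s B) fun v => .inr (v, 0) where
  injective v z h := congrArg Prod.fst (Sum.inr_injective h)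
  isHom v z := by
    rcases eq_or_ne v z with rfl | h
    · rw [op_self, op_self]
    · exact ((moore_of_ne _ h 0 0).trans (by rw [neg_zero, sub_zero])).symm
  restrict g hg := by
    obtain ⟨k, hk, hkm, hgk⟩ := hg.exists_colourMoore_apply_eq hw hw16 hD h₀ h₁ h₁'
    exact ⟨k, hk, hkm, fun v => hgk v 0⟩
  extend h hh hhm := by
    refine ⟨(Equiv.refl _).sumCongr (h.prodCongr (Equiv.refl _)),
      ⟨isHom_moore_of_comp_eq _ hh fun v => by rw [hhm], fun _ => rfl⟩, ?_⟩
    rintro g ⟨hg, hgh⟩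
    obtain ⟨k, -, -, hgk⟩ := hg.exists_colourMoore_apply_eq hw hw16 hD h₀ h₁ h₁'
    refine DFunLike.coe_injective (hg.moore_ext (isHom_moore_of_comp_eq _ hh fun v => by rw [hhm])
      fun ⟨v, p⟩ => ?_)
    have hv : k v = h v := congrArg Prod.fst (Sum.inr_injective ((hgk v 0).symm.trans (hgh v)))
    rw [hgk, hv]
    rfl

theorem realizes_colourMoore_natCast {c : α → ℕ} (hw : Odd w) (hw16 : 16 ≤ w)
    (hD : IsRecognizable α (shift (D := D))) (hc : ∀ v z, (c v + 2) * (c z + 2) < w) :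
    Realizes V c (colourMoore V (fun v => (c v + 2 : ℕ)) s B) fun v => .inr (v, 0) := by
  have hlt (v : α) : c v + 2 < w := (Nat.le_mul_self _).trans_lt (hc v v)
  have hcast {a b : ℕ} (ha : a < w) (hb : b < w) (h : (a : ZMod w) = b) : a = b :=
    CharP.natCast_injOn_Iio (ZMod w) w ha hb h
  have hmark : (Set.range c).InjOn fun k => ((k + 2 : ℕ) : ZMod w) := by
    rintro _ ⟨v, rfl⟩ _ ⟨z, rfl⟩ h
    exact Nat.add_right_cancel (hcast (hlt v) (hlt z) h)
  refine .of_comp hmark (realizes_colourMoore hw hw16 hD (fun v h => ?_) (fun v z h => ?_)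
    fun v h => ?_)
  · have := hcast (hlt v) (by omega) (h.trans Nat.cast_zero.symm)
    omega
  · have := hcast (hc v z) (by omega) ((Nat.cast_mul _ _).trans (h.trans Nat.cast_one.symm))
    nlinarith
  · have := hcast (hlt v) (by omega) (h.trans Nat.cast_one.symm)
    omega

end ColourMoore

/-! ### Large orders -/

section LargeOrders

section Cardinality

variable {P : Type*} [Fintype P]

lemma odd_card [Nonempty P] (S : SteinerQuasigroup P) : Odd (Fintype.card P) := by
  let p : P := Classical.arbitrary P
  have hfixed : Function.fixedPoints (S.op p) = {p} := by
    ext q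
    exact S.op_eq_right.trans eq_comm
  have h := Equiv.Perm.card_fixedPoints_modEq (f := S.op p) (p := 2) (n := 1)
    (funext (S.op_involutive p))
  rw [Nat.odd_iff]
  simpa only [Nat.ModEq, hfixed, Fintype.card_unique] using h

lemma card_mul_self_modEq (S : SteinerQuasigroup P) :
    Fintype.card P * Fintype.card P ≡ Fintype.card P [MOD 3] := by
  let turn (q : P × P) : P × P := (q.2, S.op q.1 q.2)
  have hturn : turn^[3] = id := by
    funext ⟨a, b⟩
    change (S.op b (S.op a b), S.op (S.op a b) (S.op b (S.op a b))) = (a, b)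
    rw [S.op_comm a, S.op_op, S.op_comm _ a, S.op_comm b a, S.op_op]
  let diagonal : P ≃ Function.fixedPoints turn := {
    toFun a := ⟨(a, a), Prod.ext rfl (S.op_self a)⟩
    invFun q := q.1.1
    left_inv _ := rfl
    right_inv := fun ⟨⟨_, _⟩, h⟩ => Subtype.ext (Prod.ext rfl (congrArg Prod.fst h).symm) }
  have h := Equiv.Perm.card_fixedPoints_modEq (f := turn) (p := 3) (n := 1) hturn
  rwa [Fintype.card_prod, ← Fintype.card_congr diagonal] at h

lemma card_mod_six [Nonempty P] (S : SteinerQuasigroup P) :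
    Fintype.card P % 6 = 1 ∨ Fintype.card P % 6 = 3 := by
  have h2 := Nat.odd_iff.mp S.odd_card
  have h3 : (Fintype.card P % 3) * (Fintype.card P % 3) % 3 = Fintype.card P % 3 := by
    rw [← Nat.mul_mod]
    exact S.card_mul_self_modEq
  have : Fintype.card P % 3 ≠ 2 := fun h => by simp [h] at h3
  omega

end Cardinality

lemma eventually_exists_moore_parameters {v : ℕ} (hv : v % 6 = 1) (K : ℕ) :
    ∀ᶠ u in Filter.atTop, u % 6 = 1 ∨ u % 6 = 3 → ∃ w t, (w % 6 = 3 ∨ w % 12 = 7) ∧ K < w ∧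
      4 * t ≤ w ∧ w < 6 * t ∧ u + 6 * t = (4 * v + 3) * w := by
  let M := 4 * v + 2
  have hM : 0 < M := by omega
  filter_upwards [Filter.eventually_ge_atTop (M * (24 * M + K))] with u hu hu6
  let n := u / M
  have hn : 24 * M + K ≤ n := (Nat.le_div_iff_mul_le hM).mpr (by rwa [mul_comm])
  have hn_le : M * n ≤ u := Nat.mul_div_le u M
  have hn_lt : u < M * (n + 1) := Nat.lt_mul_div_succ u hM
  obtain ⟨w, hnw, hwn, hw⟩ : ∃ w, n + 1 ≤ w ∧ w ≤ n + 12 ∧ w % 12 = if u % 6 = 3 then 3 else 7 := by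
    generalize hr : (if u % 6 = 3 then 3 else 7) = r
    have : r < 12 := by split_ifs at hr <;> omega
    exact ⟨n + 1 + (r + 11 * (n + 1)) % 12, by omega⟩
  have hMw : (4 * v + 3) * w = M * w + w := by
    simp only [M]
    ring
  have hMw_ge : M * (n + 1) ≤ M * w := Nat.mul_le_mul_left _ hnw
  have hMw_le : M * w ≤ M * n + 12 * M := by
    rw [mul_comm 12, ← mul_add]
    exact Nat.mul_le_mul_left _ hwn
  have hMw_mod : (M * w + w) % 6 = w % 6 := by
    rw [← hMw, Nat.mul_mod, show (4 * v + 3) % 6 = 1 by omega, one_mul, Nat.mod_mod]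
  have hw6 : w % 6 = u % 6 := by split_ifs at hw <;> omega
  refine ⟨w, (M * w + w - u) / 6, ?_, by omega, by omega, by omega, by omega⟩
  split_ifs at hw <;> omega

variable {α Q : Type*}

/-- The coloured system `V` is realized in systems of all sufficiently large admissible orders. -/
def EventuallyRealized (V : SteinerQuasigroup α) (c : α → ℕ) : Prop :=
  ∀ᶠ u in Filter.atTop, u % 6 = 1 ∨ u % 6 = 3 →
    ∃ (S : SteinerQuasigroup (Fin u)) (φ : α → Fin u), Realizes V c S φ

lemma eventuallyRealized_of_card_mod_six [Fintype α] (V : SteinerQuasigroup α) (c : α → ℕ)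
    (hα : 7 ≤ Fintype.card α) (hα6 : Fintype.card α % 6 = 1) : EventuallyRealized V c := by
  have : Nonempty α := Fintype.card_pos_iff.mp (by omega)
  let K := univ.sup c + 2
  filter_upwards [eventually_exists_moore_parameters hα6 (K * K + 16)] with u hu hu6
  obtain ⟨w, t, hw6, hKw, htw, hwt, hcard⟩ := hu hu6
  have hw : Odd w := Nat.odd_iff.mpr (by omega)
  have : NeZero w := ⟨by omega⟩
  obtain ⟨s⟩ : Nonempty (SteinerQuasigroup (ZMod w)) := by
    rcases hw6 with h | h
    · exact nonempty_of_card_mod_six (by rwa [ZMod.card])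
    · exact nonempty_of_card_mod_twelve (by rwa [ZMod.card])
  have hinj := tripleDifferences_natCast_injective (t := t) hw (by omega)
  have hrest := DifferenceSet.card_rest_ofTriples hinj
  rw [ZMod.card, Fintype.card_fin] at hrest
  obtain ⟨B⟩ : Nonempty (SteinerQuasigroup (DifferenceSet.ofTriples hinj).Rest) :=
    nonempty_of_card_mod_six (by omega)
  have hc (v z : α) : (c v + 2) * (c z + 2) ≤ K * K :=
    Nat.mul_le_mul (Nat.add_le_add_right (le_sup (mem_univ v)) 2)
      (Nat.add_le_add_right (le_sup (mem_univ z)) 2)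
  have hS := realizes_colourMoore_natCast (V := V) (s := s) (B := B) hw (by omega)
    (isRecognizable_shift hα (by rwa [ZMod.card]) (by rw [ZMod.card]; omega)
      (by rw [ZMod.card]; omega)) fun v z => (hc v z).trans_lt (by omega)
  refine ⟨_, _, hS.map (Fintype.equivFinOfCardEq ?_)⟩
  rw [Fintype.card_sum, Fintype.card_prod, Fintype.card_prod, ZMod.card, ZMod.card]
  linarith

/-- Colours for the points of `double V` distinguishing the two copies of `V`. -/
def doubleColour (c : α → ℕ) : Option (α × Bool) → ℕ
  | none => 0
  | some (_, true) => 1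
  | some (a, false) => c a + 2

lemma eq_none_of_doubleColour_eq {c : α → ℕ} {x : Option (α × Bool)}
    (h : doubleColour c x = 0) : x = none := by
  rcases x with _ | ⟨a, _ | _⟩ <;> simp_all [doubleColour]

lemma exists_of_doubleColour_eq {c : α → ℕ} {x : Option (α × Bool)} {n : ℕ}
    (h : doubleColour c x = n + 2) : ∃ a, x = some (a, false) ∧ c a = n := by
  rcases x with _ | ⟨a, _ | _⟩ <;> simp_all [doubleColour]

variable {V : SteinerQuasigroup α} {c : α → ℕ} {S : SteinerQuasigroup Q}

lemma double_none_some (a : α) : V.double.op none (some (a, false)) = some (a, true) := rfl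

lemma isHom_some_false : V.IsHom V.double fun a => some (a, false) := by
  intro a b
  rcases eq_or_ne a b with rfl | h
  · rw [op_self, op_self]
  · exact (if_neg h).symm

lemma IsHom.double {h : Equiv.Perm α} (hh : V.IsHom V h) :
    V.double.IsHom V.double (h.prodCongr (Equiv.refl Bool)).optionCongr := by
  rintro (_ | ⟨a, i⟩) (_ | ⟨b, j⟩) <;> try rfl
  rcases eq_or_ne a b with rfl | hab
  · rcases eq_or_ne i j with rfl | hij
    · rw [op_self, op_self]
    · simp [SteinerQuasigroup.double, doubleOp, hij]
  · simp [SteinerQuasigroup.double, doubleOp, hab, hh a b]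

lemma IsHom.eq_optionCongr {k : Option (α × Bool) → Option (α × Bool)}
    (hk : V.double.IsHom V.double k) (hnone : k none = none) {h : Equiv.Perm α}
    (hsome : ∀ a, k (some (a, false)) = some (h a, false)) :
    k = (h.prodCongr (Equiv.refl Bool)).optionCongr := by
  funext x
  rcases x with _ | ⟨a, _ | _⟩
  · exact hnone
  · exact hsome a
  · rw [← double_none_some (V := V), hk, hnone, hsome]
    rfl

lemma Realizes.of_double [Finite α] {φ : Option (α × Bool) → Q}
    (hφ : Realizes V.double (doubleColour c) S φ) :
    Realizes V c S fun a => φ (some (a, false)) where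
  injective a b hab := congrArg Prod.fst (Option.some_injective _ (hφ.injective hab))
  isHom := hφ.isHom.comp isHom_some_false
  restrict g hg := by
    obtain ⟨k, hk, hkc, hkg⟩ := hφ.restrict g hg
    choose f hkf hfc using fun a => exists_of_doubleColour_eq (hkc (some (a, false)))
    have hsome : Function.Injective fun a : α => some (a, false) := fun a b h =>
      congrArg Prod.fst (Option.some_injective _ h)
    have hf : Function.Injective f := fun a b hab =>
      hsome (k.injective (by rw [hkf, hkf, hab]))
    refine ⟨Equiv.ofBijective f (Finite.injective_iff_bijective.mp hf), fun a b => hsome ?_, hfc,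
      fun a => by rw [hkg, hkf, Equiv.ofBijective_apply]⟩
    have hab := hk (some (a, false)) (some (b, false))
    rwa [← isHom_some_false a b, hkf, hkf, hkf, ← isHom_some_false] at hab
  extend h hh hhc := by
    obtain ⟨g, ⟨hg, hgh⟩, huniq⟩ := hφ.extend _ hh.double (by
      rintro (_ | ⟨a, _ | _⟩) <;> simp [doubleColour, hhc])
    refine ⟨g, ⟨hg, fun a => hgh _⟩, ?_⟩
    rintro g' ⟨hg', hgh'⟩
    obtain ⟨k, hk, hkc, hkg⟩ := hφ.restrict g' hg'
    have hk_eq := hk.eq_optionCongr (eq_none_of_doubleColour_eq (hkc none)) fun a =>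
      hφ.injective ((hkg _).symm.trans (hgh' a))
    exact huniq g' ⟨hg', fun x => by rw [hkg, hk_eq]⟩

lemma EventuallyRealized.of_double [Finite α] (h : EventuallyRealized V.double (doubleColour c)) :
    EventuallyRealized V c :=
  h.mono fun _ hu hu6 =>
    let ⟨S, _, hφ⟩ := hu hu6
    ⟨S, _, hφ.of_double⟩

theorem eventuallyRealized [Finite α] (V : SteinerQuasigroup α) (c : α → ℕ) :
    EventuallyRealized V c := by
  have := Fintype.ofFinite α
  have hcard : Fintype.card α = 0 ∨ Fintype.card α % 6 = 1 ∨ Fintype.card α % 6 = 3 := by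
    cases isEmpty_or_nonempty α
    · exact .inl Fintype.card_eq_zero
    · exact .inr V.card_mod_six
  rcases hcard with h | h | h
  · refine (eventuallyRealized_of_card_mod_six _ _ ?_ ?_).of_double.of_double.of_double <;>
      simp [h]
  · refine (eventuallyRealized_of_card_mod_six _ _ ?_ ?_).of_double.of_double <;>
      simp only [Fintype.card_option, Fintype.card_prod, Fintype.card_bool] <;> omega
  · refine (eventuallyRealized_of_card_mod_six _ _ ?_ ?_).of_double <;>
      simp only [Fintype.card_option, Fintype.card_prod, Fintype.card_bool] <;> omega

end LargeOrders

/-! ### Set stabilizers -/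

section Stabilizer

variable {α Q : Type*}

/-- The colouring whose colour-preserving permutations are those that fix `W` setwise. -/
def memColour (W : Finset α) (x : α) : ℕ := if x ∈ W then 1 else 0

lemma image_eq_iff_memColour_eq {W : Finset α} {h : Equiv.Perm α} :
    W.image h = W ↔ ∀ x, memColour W (h x) = memColour W x := by
  have hmem (x : α) : memColour W (h x) = memColour W x ↔ (h x ∈ W ↔ x ∈ W) := by
    unfold memColour
    split_ifs <;> simp [*]
  simp only [hmem]
  refine ⟨fun hW x => ?_, fun hW => Finset.ext fun y => ?_⟩
  · conv_lhs => rw [← hW, h.injective.mem_finset_image]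
  · obtain ⟨x, rfl⟩ := h.surjective y
    rw [h.injective.mem_finset_image, hW]

variable {V : SteinerQuasigroup α} {S : SteinerQuasigroup Q} {W : Finset α} {φ : α → Q}

lemma Realizes.autInvariant_image [Fintype Q] [DecidableEq Q] {c : α → ℕ}
    (hφ : Realizes V c S φ) {X : Finset α}
    (hX : ∀ h : Equiv.Perm α, (∀ x, c (h x) = c x) → X.image h = X) :
    AutInvariant S.triples (X.image φ) := by
  intro g hg
  obtain ⟨h, -, hc, hgh⟩ := hφ.restrict g (isAut_triples_iff.mp hg)
  conv_rhs => rw [← hX h hc]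
  ext q
  simp only [mem_image, exists_exists_and_eq_and, hgh]

lemma Realizes.existsUnique_restrict {c : α → ℕ} (hφ : Realizes V c S φ) {g : Equiv.Perm Q}
    (hg : S.IsHom S g) : ∃! h : Equiv.Perm α, V.IsHom V h ∧ (∀ x, c (h x) = c x) ∧
      ∀ x, g (φ x) = φ (h x) := by
  obtain ⟨h, hh, hc, hgh⟩ := hφ.restrict g hg
  exact ⟨h, ⟨hh, hc, hgh⟩, fun h' ⟨_, _, hgh'⟩ =>
    Equiv.ext fun x => hφ.injective ((hgh' x).symm.trans (hgh x))⟩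

end Stabilizer

end SteinerQuasigroup

open SteinerQuasigroup in
theorem stmt17_general {α : Type*} [Fintype α] (TV : Finset (Finset α)) (hV : IsSTS TV)
    (W : Finset α) :
    ∃ N : ℕ, ∀ u : ℕ, N ≤ u → u % 6 = 1 ∨ u % 6 = 3 →
      ∃ T : Finset (Finset (Fin u)), IsSTS T ∧
        ∃ φ : α → Fin u, IsCopy TV T φ ∧
          AutInvariant T (Finset.univ.image φ) ∧ AutInvariant T (W.image φ) ∧
          (∀ g : Equiv.Perm (Fin u), IsAut T g →
            ∃! h : Equiv.Perm α, IsAut TV h ∧ W.image h = W ∧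
              ∀ x : α, g (φ x) = φ (h x)) ∧
          ∀ h : Equiv.Perm α, IsAut TV h → W.image h = W →
            ∃! g : Equiv.Perm (Fin u), IsAut T g ∧ ∀ x : α, g (φ x) = φ (h x) := by
  obtain ⟨V, rfl⟩ := hV.exists_triples_eq
  obtain ⟨N, hN⟩ := Filter.eventually_atTop.mp (V.eventuallyRealized (memColour W))
  refine ⟨N, fun u hu hu6 => ?_⟩
  obtain ⟨S, φ, hφ⟩ := hN u hu hu6
  refine ⟨S.triples, S.isSTS_triples, φ, hφ.isHom.isCopy_triples hφ.injective,
    hφ.autInvariant_image fun h _ => image_univ_equiv h,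
    hφ.autInvariant_image fun _ => image_eq_iff_memColour_eq.mpr, ?_⟩
  simp only [isAut_triples_iff, image_eq_iff_memColour_eq]
  exact ⟨fun _ => hφ.existsUnique_restrict, hφ.extend⟩

/-- **Corollary 4.7.** If `V₁` is a proper subsystem of a Steiner triple system `V`,
then there is an integer `N` such that, for `u ≥ N` and `u ≡ 1` or `3 (mod 6)`,
there is a Steiner triple system `U` on `u` points having copies of `V` and `V₁` as
`Aut U`-invariant subsystems, such that `Aut U` is isomorphic (via restriction to
the copy of `V`) to the set-stabilizer of `V₁` in `Aut V`, and acts on the copy of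
`V` as that stabilizer. -/
theorem stmt17 {α : Type*} [Fintype α] (TV : Finset (Finset α)) (hV : IsSTS TV)
    (W : Finset α) (hSub : IsSub TV W) (hne : W ≠ Finset.univ) :
    ∃ N : ℕ, ∀ u : ℕ, N ≤ u → u % 6 = 1 ∨ u % 6 = 3 →
      ∃ T : Finset (Finset (Fin u)), IsSTS T ∧
        ∃ φ : α → Fin u, IsCopy TV T φ ∧
          AutInvariant T (Finset.univ.image φ) ∧ AutInvariant T (W.image φ) ∧
          (∀ g : Equiv.Perm (Fin u), IsAut T g →
            ∃! h : Equiv.Perm α, IsAut TV h ∧ W.image h = W ∧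
              ∀ x : α, g (φ x) = φ (h x)) ∧
          ∀ h : Equiv.Perm α, IsAut TV h → W.image h = W →
            ∃! g : Equiv.Perm (Fin u), IsAut T g ∧ ∀ x : α, g (φ x) = φ (h x) :=
  stmt17_general TV hV W

end
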